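/- Standard form of P-s-Gevrey asymptotic expansions (Theorem 7.3, part (1)): Let d ≥ 1, s > 0, ℓ an injective linear form, P holomorphic on D(0;R) with P(0) = 0 and P not identically zero, and a ∈ ℕ^d the ℓ-minimal exponent of the Taylor series of P at 0. Let Π = Π_P(θ_1,θ_2;R) be a P-sector and f : Π → ℂ holomorphic. If f admits a P-s-Gevrey asymptotic expansion in the estimate sense, then there exist ρ > 0, a sequence (g_n) of bounded holomorphic functions on D(0;ρ) with ∂^β g_n(0) = 0 for every n and every β ∈ a + ℕ^d, and constants K, A > 0 such that sup_{D(0;ρ)}|g_n| ≤ K·A^n·Γ(sn+1) for every n and |f(x) − Σ_{n<N} g_n(x)·P(x)^n| ≤ K·A^N·Γ(sN+1)·|P(x)|^N for every N ∈ ℕ and every x ∈ Π ∩ D(0;ρ). -/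

import Mathlib

open Set Complex

noncomputable section

/-- Open polydisk of radius `r` centered at `0` in `ℂ^d`. -/
def polydisk (d : ℕ) (r : ℝ) : Set (Fin d → ℂ) :=
  {x | ∀ j, ‖x j‖ < r}

/-- The `P`-sector `Π_P(a,b;r)`. -/
def PSector (d : ℕ) (P : (Fin d → ℂ) → ℂ) (a b r : ℝ) : Set (Fin d → ℂ) :=
  {x | (∀ j, 0 < ‖x j‖ ∧ ‖x j‖ < r) ∧ P x ≠ 0 ∧
    ∃ θ ∈ Set.Ioo a b, P x = (‖P x‖ : ℂ) * Complex.exp (θ * Complex.I)}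

/-- Partial derivative in the `j`-th coordinate direction. -/
def pderivCoord {d : ℕ} (j : Fin d) (f : (Fin d → ℂ) → ℂ) : (Fin d → ℂ) → ℂ :=
  fun x => fderiv ℂ f x (Pi.single j 1)

/-- Mixed partial derivative `∂^β = ∂^{β_1}_{x_1} ⋯ ∂^{β_d}_{x_d}`. -/
def mixedPartial {d : ℕ} (β : Fin d → ℕ) (f : (Fin d → ℂ) → ℂ) : (Fin d → ℂ) → ℂ :=
  (List.finRange d).foldr (fun j g => (pderivCoord j)^[β j] g) f


lemma gam_half {y : ℝ} (hy : 1 ≤ y) : 1 / 2 ≤ Real.Gamma y := by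
  rcases le_or_gt 2 y with h | h
  · have := Real.Gamma_strictMonoOn_Ici.monotoneOn (by simp : (2:ℝ) ∈ Set.Ici 2) h h
    rw [Real.Gamma_two] at this
    linarith
  · have h2 : (2:ℝ) ≤ y + 1 := by linarith
    have := Real.Gamma_strictMonoOn_Ici.monotoneOn (by simp : (2:ℝ) ∈ Set.Ici 2) h2 h2
    rw [Real.Gamma_two, Real.Gamma_add_one (by linarith)] at this
    have hp := Real.Gamma_pos_of_pos (by linarith : 0 < y)
    nlinarith

lemma gam_le_one {y : ℝ} (hy : 1 ≤ y) (hy2 : y ≤ 2) : Real.Gamma y ≤ 1 := by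
  have := Real.convexOn_Gamma.2 (by simp : (1:ℝ) ∈ Set.Ioi 0) (by simp : (2:ℝ) ∈ Set.Ioi 0)
    (by linarith : 0 ≤ 2 - y) (by linarith : 0 ≤ y - 1) (by ring)
  simp only [smul_eq_mul, Real.Gamma_one, Real.Gamma_two] at this
  ring_nf at this
  linarith

lemma gam_mono {s : ℝ} (hs : 0 < s) (n : ℕ) :
    Real.Gamma (s * n + 1) ≤ 2 * Real.Gamma (s * (n + 1 : ℕ) + 1) := by
  have h0 : 0 ≤ s * n := by positivity
  have h1 : s * ((n + 1 : ℕ) : ℝ) + 1 = s * n + 1 + s := by push_cast; ring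
  rw [h1]
  have hh := gam_half (by linarith : 1 ≤ s * n + 1 + s)
  rcases le_or_gt 2 (s * n + 1) with h | h
  · have := Real.Gamma_strictMonoOn_Ici.monotoneOn h
      (show (2:ℝ) ≤ s * n + 1 + s by linarith) (by linarith)
    linarith
  · have := gam_le_one (by linarith : 1 ≤ s * n + 1) h.le
    linarith

lemma gam_prod {x : ℝ} (hx : 0 < x) (k : ℕ) :
    Real.Gamma (x + k) ≤ Real.Gamma x * (x + k) ^ k := by
  induction k with
  | zero => simp
  | succ k ih =>
    have hg := Real.Gamma_pos_of_pos hx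
    have hk : (0:ℝ) ≤ k := by positivity
    push_cast
    rw [← add_assoc, Real.Gamma_add_one (by positivity)]
    calc (x + k) * Real.Gamma (x + k) ≤ (x + k) * (Real.Gamma x * (x + k) ^ k) := by gcongr
      _ = Real.Gamma x * (x + k) ^ (k + 1) := by ring
      _ ≤ _ := mul_le_mul_of_nonneg_left
        (pow_le_pow_left₀ (by positivity) (by linarith) _) hg.le

lemma gam_growth {s : ℝ} (hs : 0 < s) : ∃ C B : ℝ, 1 ≤ C ∧ 1 ≤ B ∧ ∀ n : ℕ,
    Real.Gamma (s * (n + 1 : ℕ) + 1) ≤ C * B ^ n * Real.Gamma (s * n + 1) := by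
  obtain ⟨k, hk⟩ := exists_nat_ge (s + 1)
  have hk0 : (0:ℝ) ≤ k := by positivity
  refine ⟨k.factorial * Real.exp (1 + k), Real.exp s, ?_, ?_, fun n => ?_⟩
  · have h1 : (1:ℝ) ≤ k.factorial := by exact_mod_cast Nat.one_le_iff_ne_zero.2 k.factorial_ne_zero
    have h2 : 1 ≤ Real.exp (1 + k) := Real.one_le_exp (by positivity)
    nlinarith
  · exact Real.one_le_exp hs.le
  have h0 : 0 ≤ s * n := by positivity
  have h1 : s * ((n + 1 : ℕ) : ℝ) + 1 = s * n + 1 + s := by push_cast; ring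
  rw [h1]
  have hx : 0 < s * n + 1 := by linarith
  have hg := Real.Gamma_pos_of_pos hx
  have key : Real.Gamma (s * n + 1 + s) ≤ Real.Gamma (s * n + 1 + k) := by
    rcases le_or_gt 2 (s * n + 1 + s) with h | h
    · exact Real.Gamma_strictMonoOn_Ici.monotoneOn h
        (show (2:ℝ) ≤ s * n + 1 + k by linarith) (by linarith)
    · have h3 := gam_le_one (by linarith : 1 ≤ s * n + 1 + s) h.le
      have h4 : (2:ℝ) ≤ s * n + 1 + k := by linarith
      have := Real.Gamma_strictMonoOn_Ici.monotoneOn (by simp : (2:ℝ) ∈ Set.Ici 2) h4 h4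
      rw [Real.Gamma_two] at this
      linarith
  have h5 : (s * n + 1 + k) ^ k ≤ k.factorial * Real.exp (s * n + 1 + k) := by
    have := Real.pow_div_factorial_le_exp (s * n + 1 + k) (by positivity) k
    rw [div_le_iff₀ (by positivity)] at this
    linarith
  calc _ ≤ _ := key
    _ ≤ _ := gam_prod hx k
    _ ≤ Real.Gamma (s * n + 1) * (k.factorial * Real.exp (s * n + 1 + k)) := by gcongr
    _ = _ := by
      rw [← Real.exp_nat_mul, show s * n + 1 + k = (1 + k) + n * s by ring, Real.exp_add]; ring

/-- separately holomorphic -/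
def SepHol (d : ℕ) (ρ : ℝ) (h : (Fin d → ℂ) → ℂ) : Prop :=
  ∀ x ∈ polydisk d ρ, ∀ j, DifferentiableAt ℂ (fun t => h (Function.update x j t)) (x j)

lemma par_one {U : Set ℂ} (hU : IsOpen U) {F : ℂ → ℝ → ℂ} {M : ℝ}
    (hc : ∀ t ∈ U, Continuous (F t)) (hd : ∀ θ, DifferentiableOn ℂ (fun t => F t θ) U)
    (hb : ∀ t ∈ U, ∀ θ, ‖F t θ‖ ≤ M) :
    DifferentiableOn ℂ (fun t => ∫ θ in (0:ℝ)..(2 * Real.pi), F t θ) U := by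
  intro t₀ ht₀
  obtain ⟨ε, hε, hball⟩ := Metric.isOpen_iff.1 hU t₀ ht₀
  have hsub : ∀ t ∈ Metric.ball t₀ (ε / 2), Metric.closedBall t (ε / 4) ⊆ U := by
    intro t ht z hz
    apply hball
    rw [Metric.mem_ball] at *
    rw [Metric.mem_closedBall] at hz
    linarith [dist_triangle z t t₀]
  have hmem : ∀ t ∈ Metric.ball t₀ (ε / 2), t ∈ U := fun t ht =>
    hsub t ht (Metric.mem_closedBall_self (by positivity))
  have hder : ∀ θ, ∀ t ∈ Metric.ball t₀ (ε / 2),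
      HasDerivAt (fun t => F t θ) (deriv (fun t => F t θ) t) t := fun θ t ht =>
    ((hd θ).differentiableAt (hU.mem_nhds (hmem t ht))).hasDerivAt
  have := (intervalIntegral.hasDerivAt_integral_of_dominated_loc_of_deriv_le
    (μ := MeasureTheory.volume) (a := 0) (b := 2 * Real.pi) (F := F) (x₀ := t₀)
    (s := Metric.ball t₀ (ε / 2)) (F' := fun t θ => deriv (fun t => F t θ) t)
    (bound := fun _ => M / (ε / 4)) (Metric.ball_mem_nhds _ (by positivity)) ?_ ?_ ?_ ?_ ?_ ?_).2
  · exact this.differentiableAt.differentiableWithinAt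
  · filter_upwards [hU.mem_nhds ht₀] with t ht using (hc t ht).aestronglyMeasurable
  · exact (hc t₀ ht₀).intervalIntegrable _ _
  · have hseq : Filter.Tendsto (fun n : ℕ => t₀ + ((ε / 2 / (n + 2) : ℝ) : ℂ)) Filter.atTop
        (nhdsWithin t₀ {t₀}ᶜ) := by
      rw [tendsto_nhdsWithin_iff]
      constructor
      · have : Filter.Tendsto (fun n : ℕ => (ε / 2 / (n + 2) : ℝ)) Filter.atTop (nhds 0) := by
          apply Filter.Tendsto.div_atTop tendsto_const_nhds
          exact Filter.tendsto_atTop_add_const_right _ _ tendsto_natCast_atTop_atTop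
        have h2 := (Complex.continuous_ofReal.tendsto 0).comp this
        simpa using tendsto_const_nhds.add h2
      · refine Filter.Eventually.of_forall fun n => ?_
        have : (ε / 2 / (n + 2) : ℝ) ≠ 0 := by positivity
        simpa only [Set.mem_compl_iff, Set.mem_singleton_iff, add_eq_left, Complex.ofReal_eq_zero]
          using this
    refine aestronglyMeasurable_of_tendsto_ae Filter.atTop
      (f := fun (n : ℕ) θ => slope (fun t => F t θ) t₀ (t₀ + ((ε / 2 / (n + 2) : ℝ) : ℂ))) ?_ ?_
    · intro n
      apply Continuous.aestronglyMeasurable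
      simp only [slope_def_field]
      refine ((hc _ (hmem _ ?_)).sub (hc t₀ ht₀)).div_const _
      have : (ε / 2 / (n + 2) : ℝ) < ε / 2 := by
        apply div_lt_self (by positivity)
        have : (0:ℝ) ≤ n := by positivity
        linarith
      rw [Metric.mem_ball, dist_eq_norm, add_sub_cancel_left, Complex.norm_real,
        Real.norm_of_nonneg (by positivity)]
      exact this
    · refine Filter.Eventually.of_forall fun θ => ?_
      exact (hasDerivAt_iff_tendsto_slope.1
        (hder θ t₀ (Metric.mem_ball_self (by positivity)))).comp hseq
  · refine Filter.Eventually.of_forall fun θ _ t ht => ?_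
    apply Complex.norm_deriv_le_of_forall_mem_sphere_norm_le (by positivity)
    · refine DifferentiableOn.diffContOnCl ?_
      rw [closure_ball _ (by positivity)]
      exact (hd θ).mono (hsub t ht)
    · intro z hz
      exact hb z (hsub t ht (Metric.sphere_subset_closedBall hz)) θ
  · exact intervalIntegrable_const
  · refine Filter.Eventually.of_forall fun θ _ t ht => hder θ t ht

lemma update_mem_polydisk {d : ℕ} {ρ : ℝ} {x : Fin d → ℂ} (hx : x ∈ polydisk d ρ) (j : Fin d)
    {t : ℂ} (ht : ‖t‖ < ρ) : Function.update x j t ∈ polydisk d ρ := by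
  intro i
  rcases eq_or_ne i j with rfl | h
  · simpa using ht
  · simpa [h] using hx i

lemma SepHol.diffOn {d : ℕ} {ρ : ℝ} {h : (Fin d → ℂ) → ℂ} (hh : SepHol d ρ h) {x : Fin d → ℂ}
    (hx : x ∈ polydisk d ρ) (j : Fin d) :
    DifferentiableOn ℂ (fun t => h (Function.update x j t)) (Metric.ball 0 ρ) := by
  intro t ht
  have ht' : ‖t‖ < ρ := by simpa using ht
  have := hh _ (update_mem_polydisk hx j ht') j
  simp only [Function.update_idem, Function.update_self] at this
  exact this.differentiableWithinAt

lemma sepHol_par {d : ℕ} {ρ : ℝ} {F : (Fin d → ℂ) → ℝ → ℂ} {M : ℝ}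
    (hc : ∀ x ∈ polydisk d ρ, Continuous (F x)) (hd : ∀ θ, SepHol d ρ (fun x => F x θ))
    (hb : ∀ x ∈ polydisk d ρ, ∀ θ, ‖F x θ‖ ≤ M) :
    SepHol d ρ (fun x => ∫ θ in (0:ℝ)..(2 * Real.pi), F x θ) := by
  intro x hx j
  have := par_one (U := Metric.ball 0 ρ) Metric.isOpen_ball
    (F := fun t θ => F (Function.update x j t) θ) (M := M)
    (fun t ht => hc _ (update_mem_polydisk hx j (by simpa using ht)))
    (fun θ => (hd θ).diffOn hx j)
    (fun t ht θ => hb _ (update_mem_polydisk hx j (by simpa using ht)) θ)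
  exact this.differentiableAt (Metric.isOpen_ball.mem_nhds (by simpa using hx j))

lemma sepHol_of_analytic {d : ℕ} {ρ : ℝ} {h : (Fin d → ℂ) → ℂ}
    (hh : AnalyticOnNhd ℂ h (polydisk d ρ)) : SepHol d ρ h := by
  intro x hx j
  have h1 : DifferentiableAt ℂ (fun t : ℂ => Function.update x j t) (x j) :=
    (hasFDerivAt_update x (x j)).differentiableAt
  have h2 : DifferentiableAt ℂ h (Function.update x j (x j)) := by
    rw [Function.update_eq_self]; exact (hh x hx).differentiableAt
  exact h2.comp (x j) h1

/-- monomial -/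
def mono {d : ℕ} (x : Fin d → ℂ) (α : Fin d → ℕ) : ℂ := ∏ j, x j ^ α j

lemma summable_geom : ∀ {d : ℕ} (u : Fin d → ℝ), (∀ j, 0 ≤ u j) → (∀ j, u j < 1) →
    Summable (fun α : Fin d → ℕ => ∏ j, u j ^ α j) := by
  intro d
  induction d with
  | zero => intro u _ _; exact (hasSum_fintype _).summable
  | succ d ih =>
    intro u h0 h1
    rw [← (Fin.consEquiv (fun _ => ℕ)).summable_iff]
    have := (summable_geometric_of_lt_one (h0 0) (h1 0)).mul_of_nonneg
      (ih (fun j => u j.succ) (fun j => h0 _) (fun j => h1 _))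
      (fun n => pow_nonneg (h0 0) n)
      (fun α => Finset.prod_nonneg fun j _ => pow_nonneg (h0 _) _)
    refine this.congr fun p => ?_
    simp [Fin.consEquiv, Fin.prod_univ_succ]

lemma mono_norm {d : ℕ} (x : Fin d → ℂ) (α : Fin d → ℕ) : ‖mono x α‖ = ∏ j, ‖x j‖ ^ α j := by
  simp [mono, norm_prod]

lemma osgood : ∀ {d : ℕ} {ρ r M : ℝ} (_ : 0 < r) (_ : r < ρ) {h : (Fin d → ℂ) → ℂ}
    (_ : SepHol d ρ h) (_ : ∀ x ∈ polydisk d ρ, ‖h x‖ ≤ M),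
    ∃ c : (Fin d → ℕ) → ℂ, (∀ α, ‖c α‖ ≤ M * ∏ j, (r⁻¹) ^ α j) ∧
      ∀ x ∈ polydisk d r, HasSum (fun α => c α * mono x α) (h x) := by
  intro d
  induction d with
  | zero =>
    intro ρ r M hr hρ h hh hM
    refine ⟨fun _ => h 0, fun α => ?_, fun x hx => ?_⟩
    · simpa using hM 0 (fun j => j.elim0)
    · have := hasSum_fintype (fun α : Fin 0 → ℕ => h 0 * mono x α)
      simp only [Finset.univ_unique, Finset.sum_singleton] at this
      have e : ∀ α, mono x α = 1 := fun α => by simp [mono]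
      simp only [e, mul_one] at this ⊢
      rw [Subsingleton.elim x 0]
      exact this
  | succ d ih =>
    intro ρ r M hr hρ h hh hM
    have hρ0 : 0 < ρ := hr.trans hρ
    have cons_mem : ∀ {ρ' : ℝ} {z : ℂ} {y : Fin d → ℂ}, ‖z‖ < ρ' → y ∈ polydisk d ρ' →
        (Fin.cons z y : Fin (d+1) → ℂ) ∈ polydisk (d+1) ρ' := by
      intro ρ' z y hz hy j
      refine Fin.cases ?_ (fun i => ?_) j
      · simpa using hz
      · simpa using hy i
    have hz : ∀ y ∈ polydisk d ρ, DifferentiableOn ℂ (fun z => h (Fin.cons z y))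
        (Metric.ball 0 ρ) := by
      intro y hy
      have := hh.diffOn (x := Fin.cons 0 y) (cons_mem (by simpa using hρ0) hy) 0
      simpa [Fin.update_cons_zero] using this
    -- coefficient functions
    have cm : ∀ θ, ‖circleMap 0 r θ‖ = r := fun θ => by simp [abs_of_pos hr]
    have cm0 : ∀ θ, circleMap 0 r θ ≠ 0 := fun θ => circleMap_ne_center hr.ne'
    let H : ℕ → (Fin d → ℂ) → ℂ := fun k y => (2 * Real.pi * I : ℂ)⁻¹ •
      ∮ z in C(0, r), (z⁻¹) ^ k * (z⁻¹ * h (Fin.cons z y))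
    have hHb : ∀ k, ∀ y ∈ polydisk d ρ, ‖H k y‖ ≤ M * (r⁻¹) ^ k := by
      intro k y hy
      have := circleIntegral.norm_two_pi_i_inv_smul_integral_le_of_norm_le_const (c := 0) (R := r)
        (f := fun z => (z⁻¹) ^ k * (z⁻¹ * h (Fin.cons z y))) (C := (r⁻¹) ^ k * (r⁻¹ * M)) hr.le ?_
      · refine this.trans (le_of_eq ?_)
        field_simp
      · intro z hz
        have hz' : ‖z‖ = r := by simpa using hz
        rw [norm_mul, norm_mul, norm_pow, norm_inv, hz']
        have := hM _ (cons_mem (by rw [hz']; exact hρ) hy)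
        gcongr
    have hHs : ∀ k, SepHol d ρ (H k) := by
      intro k
      have key := sepHol_par (d := d) (ρ := ρ) (M := M * r⁻¹ ^ k)
        (F := fun y θ => deriv (circleMap 0 r) θ • ((circleMap 0 r θ)⁻¹ ^ k *
          ((circleMap 0 r θ)⁻¹ * h (Fin.cons (circleMap 0 r θ) y)))) ?_ ?_ ?_
      · intro y hy j
        have := (key y hy j).const_smul ((2 * Real.pi * I : ℂ)⁻¹)
        exact this
      · intro y hy
        have h1 : Continuous fun θ => h (Fin.cons (circleMap 0 r θ) y) := by
          rw [← continuousOn_univ]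
          exact (hz y hy).continuousOn.comp (continuous_circleMap 0 r).continuousOn
            (fun θ _ => by simp [abs_of_pos hr, hρ])
        have h2 : Continuous fun θ => (circleMap 0 r θ)⁻¹ := (continuous_circleMap 0 r).inv₀ cm0
        simp only [deriv_circleMap]
        exact ((continuous_circleMap 0 r).mul continuous_const).smul ((h2.pow k).mul (h2.mul h1))
      · intro θ y hy j
        have hc := hh (Fin.cons (circleMap 0 r θ) y) (cons_mem (by rw [cm]; exact hρ) hy) j.succ
        simp only [← Fin.cons_update, Fin.cons_succ] at hc
        exact ((hc.const_mul _).const_mul _).const_mul _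
      · intro y hy θ
        have := hM _ (cons_mem (by rw [cm θ]; exact hρ) hy)
        simp only [deriv_circleMap, norm_smul, norm_mul, norm_pow, norm_inv, cm, norm_I, mul_one]
        calc _ ≤ r * (r⁻¹ ^ k * (r⁻¹ * M)) := by gcongr
          _ = _ := by field_simp
    choose c hcb hcs using fun k => ih hr hρ (hHs k) (hHb k)
    refine ⟨fun α => c (α 0) (fun j => α j.succ), fun α => ?_, fun x hx => ?_⟩
    · refine (hcb _ _).trans (le_of_eq ?_)
      rw [Fin.prod_univ_succ]; ring
    · set z := x 0 with hz0
      set y : Fin d → ℂ := fun j => x j.succ with hy0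
      have hxe : x = Fin.cons z y := by
        funext j; refine Fin.cases ?_ (fun i => ?_) j <;> simp [hz0, hy0]
      have hzr : ‖z‖ < r := hx 0
      have hyr : y ∈ polydisk d r := fun j => hx j.succ
      have hyρ : y ∈ polydisk d ρ := fun j => (hyr j).trans hρ
      have hsum1 : HasSum (fun k => z ^ k * H k y) (h x) := by
        have hint : CircleIntegrable (fun z => h (Fin.cons z y)) 0 r := by
          apply ContinuousOn.circleIntegrable hr.le
          refine (hz y hyρ).continuousOn.mono fun w hw => ?_
          have : ‖w‖ = r := by simpa using hw
          simpa [this] using hρ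
        have h1 := hasSum_cauchyPowerSeries_integral hint hzr
        have hval : ((2 * Real.pi * I : ℂ)⁻¹ • ∮ w in C(0, r), (w - (0 + z))⁻¹ • h (Fin.cons w y))
            = h x := by
          have hd : DiffContOnCl ℂ (fun z => h (Fin.cons z y)) (Metric.ball 0 r) := by
            apply DifferentiableOn.diffContOnCl
            rw [closure_ball _ hr.ne']
            exact (hz y hyρ).mono (Metric.closedBall_subset_ball hρ)
          have := hd.two_pi_i_inv_smul_circleIntegral_sub_inv_smul (w := z) (by simpa using hzr)
          rw [hxe]
          simpa using this
        rw [hval] at h1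
        have e : (fun k => z ^ k * H k y) =
            fun k => cauchyPowerSeries (fun z => h (Fin.cons z y)) 0 r k fun _ => z := ?_
        · rw [e]; exact h1
        funext k
        rw [cauchyPowerSeries_apply]
        simp only [H, smul_eq_mul, sub_zero]
        rw [mul_left_comm, ← circleIntegral.integral_const_mul]
        congr 2
        funext w
        rw [div_eq_mul_inv, mul_pow]; ring
      have hfib : ∀ k, HasSum (fun α => z ^ k * (c k α * mono y α)) (z ^ k * H k y) :=
        fun k => (hcs k y hyr).mul_left _
      have hM0 : 0 ≤ M := (norm_nonneg _).trans (hM x (fun j => (hx j).trans hρ))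
      have hsm : Summable (fun p : ℕ × (Fin d → ℕ) => z ^ p.1 * (c p.1 p.2 * mono y p.2)) := by
        have hg := summable_geom (fun j => ‖x j‖ * r⁻¹) (fun j => by positivity)
          (fun j => by rw [← div_eq_mul_inv, div_lt_one hr]; exact hx j)
        rw [← (Fin.consEquiv (fun _ => ℕ)).summable_iff] at hg
        refine Summable.of_norm_bounded (hg.mul_left M) fun p => ?_
        rw [norm_mul, norm_mul, mono_norm, norm_pow]
        calc _ ≤ ‖z‖ ^ p.1 * ((M * (r⁻¹) ^ p.1 * ∏ j, (r⁻¹) ^ p.2 j) * ∏ j, ‖y j‖ ^ p.2 j) := by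
              have := hcb p.1 p.2
              gcongr
          _ = _ := by
            simp only [Function.comp, Fin.consEquiv, Equiv.coe_fn_mk, Fin.prod_univ_succ,
              Fin.cons_zero, Fin.cons_succ, mul_pow, Finset.prod_mul_distrib]
            simp only [hz0, hy0]
            ring
      have htot := hsm.hasSum
      have hu := (htot.prod_fiberwise hfib).unique hsum1
      rw [hu] at htot
      rw [← (Fin.consEquiv (fun _ => ℕ)).hasSum_iff]
      have e : (fun α => c (α 0) (fun j => α j.succ) * mono x α) ∘ (Fin.consEquiv (fun _ => ℕ)) =
        fun p : ℕ × (Fin d → ℕ) => z ^ p.1 * (c p.1 p.2 * mono y p.2) := ?_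
      · rw [e]; exact htot
      funext p
      simp only [Function.comp, Fin.consEquiv, Equiv.coe_fn_mk, mono, Fin.prod_univ_succ,
              Fin.cons_zero, Fin.cons_succ]
      ring

lemma exists_multilin {d : ℕ} (α : Fin d → ℕ) {n : ℕ} (hn : ∑ j, α j = n) :
    ∃ μ : ContinuousMultilinearMap ℂ (fun _ : Fin n => (Fin d → ℂ)) ℂ, ‖μ‖ ≤ 1 ∧
      ∀ x, μ (fun _ => x) = mono x α := by
  set l : List (Fin d) := (List.finRange d).flatMap (fun j => List.replicate (α j) j) with hl
  have hlen : l.length = n := by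
    rw [← hn, hl, List.length_flatMap]
    simp [List.sum_ofFn, ← List.ofFn_eq_map]
  subst hlen
  refine ⟨(ContinuousMultilinearMap.mkPiAlgebraFin ℂ l.length ℂ).compContinuousLinearMap
    (fun k => ContinuousLinearMap.proj (l.get k)), ?_, fun x => ?_⟩
  · refine (ContinuousMultilinearMap.norm_compContinuousLinearMap_le _ _).trans ?_
    rw [ContinuousMultilinearMap.norm_mkPiAlgebraFin, one_mul]
    refine Finset.prod_le_one (fun _ _ => norm_nonneg _) fun k _ => ?_
    refine ContinuousLinearMap.opNorm_le_bound _ zero_le_one fun x => ?_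
    rw [one_mul]
    exact norm_le_pi_norm x _
  · simp only [ContinuousMultilinearMap.compContinuousLinearMap_apply,
      ContinuousMultilinearMap.mkPiAlgebraFin_apply, ContinuousLinearMap.proj_apply]
    have : List.ofFn (fun k => x (l.get k)) = l.map x := by
      conv_rhs => rw [← List.ofFn_get l, List.map_ofFn]
      rfl
    rw [this, hl, List.map_flatMap, mono]
    simp [List.flatMap_def, List.prod_flatten, ← List.ofFn_eq_map, List.prod_ofFn, Function.comp_def]

lemma polydisk_eq_ball {d : ℕ} {ρ : ℝ} (hρ : 0 < ρ) : polydisk d ρ = Metric.ball 0 ρ := by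
  ext x
  simp [polydisk, pi_norm_lt_iff hρ]

lemma isOpen_polydisk {d : ℕ} {ρ : ℝ} (hρ : 0 < ρ) : IsOpen (polydisk d ρ) := by
  rw [polydisk_eq_ball hρ]; exact Metric.isOpen_ball

lemma analytic_of_series {d : ℕ} {ρ : ℝ} (hρ : 0 < ρ) {c : (Fin d → ℕ) → ℂ}
    (hc : Summable (fun α => ‖c α‖ * ρ ^ (∑ j, α j))) {f : (Fin d → ℂ) → ℂ}
    (hf : ∀ x ∈ polydisk d ρ, HasSum (fun α => c α * mono x α) (f x)) :
    AnalyticOnNhd ℂ f (polydisk d ρ) := by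
  have hμ' : ∀ n : ℕ, ∀ α : Fin d → ℕ, ∃ ν : ContinuousMultilinearMap ℂ
      (fun _ : Fin n => (Fin d → ℂ)) ℂ, (∑ j, α j = n → ‖ν‖ ≤ 1 ∧ ∀ x, ν (fun _ => x) = mono x α) := by
    intro n α
    by_cases h : ∑ j, α j = n
    · obtain ⟨ν, h⟩ := exists_multilin α h
      exact ⟨ν, fun _ => h⟩
    · exact ⟨0, fun h' => absurd h' h⟩
  choose ν hν using hμ'
  let p : FormalMultilinearSeries ℂ (Fin d → ℂ) ℂ := fun n =>
    ∑ α ∈ Finset.piAntidiag Finset.univ n, c α • ν n α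
  have hmem : ∀ n (α : Fin d → ℕ), α ∈ Finset.piAntidiag Finset.univ n ↔ ∑ j, α j = n := by
    intro n α; simp
  have hpb : ∀ n, ‖p n‖ * ρ ^ n ≤ ∑' α, ‖c α‖ * ρ ^ (∑ j, α j) := by
    intro n
    calc ‖p n‖ * ρ ^ n ≤ (∑ α ∈ Finset.piAntidiag Finset.univ n, ‖c α‖) * ρ ^ n := by
          gcongr
          refine (norm_sum_le _ _).trans (Finset.sum_le_sum fun α hα => ?_)
          rw [norm_smul]
          exact mul_le_of_le_one_right (norm_nonneg _) (hν n α ((hmem n α).1 hα)).1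
      _ = ∑ α ∈ Finset.piAntidiag Finset.univ n, ‖c α‖ * ρ ^ (∑ j, α j) := by
          rw [Finset.sum_mul]
          exact Finset.sum_congr rfl fun α hα => by rw [(hmem n α).1 hα]
      _ ≤ _ := hc.sum_le_tsum _ fun α _ => by positivity
  have hps : HasFPowerSeriesOnBall f p 0 (ENNReal.ofReal ρ) := by
    refine ⟨?_, by simpa using hρ, fun {y} hy => ?_⟩
    · have : ENNReal.ofReal ρ = ((NNReal.mk ρ hρ.le : NNReal) : ENNReal) := by
        rw [ENNReal.ofReal, Real.toNNReal_of_nonneg hρ.le]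
      rw [this]
      exact p.le_radius_of_bound _ hpb
    · rw [Metric.eball_ofReal, ← polydisk_eq_ball hρ] at hy
      rw [zero_add]
      have h1 := hf y hy
      rw [← (Equiv.sigmaFiberEquiv (fun α : Fin d → ℕ => ∑ j, α j)).hasSum_iff] at h1
      refine h1.sigma fun n => ?_
      have : p n (fun _ => y) = ∑ α ∈ Finset.piAntidiag Finset.univ n, c α * mono y α := by
        simp only [p, sum_apply, smul_apply,
          smul_eq_mul]
        exact Finset.sum_congr rfl fun α hα => by rw [(hν n α ((hmem n α).1 hα)).2]
      rw [this]
      have h2 := Finset.hasSum (Finset.piAntidiag Finset.univ n) (fun α => c α * mono y α)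
      let e : {α : Fin d → ℕ // ∑ j, α j = n} ≃
          ((Finset.piAntidiag (Finset.univ : Finset (Fin d)) n : Finset _) : Set (Fin d → ℕ)) :=
        Equiv.subtypeEquivRight fun α => (hmem n α).symm
      rw [← e.hasSum_iff] at h2
      exact h2
  have := hps.analyticOnNhd
  rwa [Metric.eball_ofReal, ← polydisk_eq_ball hρ] at this

/-- power series representation near 0 -/
def HasPS {d : ℕ} (c : (Fin d → ℕ) → ℂ) (f : (Fin d → ℂ) → ℂ) : Prop :=
  ∃ r > 0, Summable (fun α => ‖c α‖ * r ^ (∑ j, α j)) ∧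
    ∀ x ∈ polydisk d r, HasSum (fun α => c α * mono x α) (f x)

lemma mono_update {d : ℕ} (x : Fin d → ℂ) (j : Fin d) (t : ℂ) (α : Fin d → ℕ) :
    mono (Function.update x j t) α = (∏ i ∈ Finset.univ.erase j, x i ^ α i) * t ^ α j := by
  rw [mono, ← Finset.prod_erase_mul _ _ (Finset.mem_univ j)]
  congr 1
  · refine Finset.prod_congr rfl fun i hi => ?_
    rw [Function.update_of_ne (Finset.ne_of_mem_erase hi)]
  · simp

lemma hasPS_deriv {d : ℕ} {c : (Fin d → ℕ) → ℂ} {f : (Fin d → ℂ) → ℂ} (h : HasPS c f) (j : Fin d) :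
    HasPS (fun α => ((α j + 1 : ℕ) : ℂ) * c (α + Pi.single j 1)) (pderivCoord j f) := by
  obtain ⟨r, hr, hs, hf⟩ := h
  have han := analytic_of_series hr hs hf
  have hr2 : 0 < r / 2 := by positivity
  -- the majorant
  have hu : Summable (fun α : Fin d → ℕ => ‖c α‖ * (α j * (r / 2) ^ (∑ i, α i - 1))) := by
    refine Summable.of_nonneg_of_le (fun α => by positivity) (fun α => ?_) (hs.mul_left (2 / r))
    rcases Nat.eq_zero_or_pos (∑ i, α i) with h0 | h0
    · have : α j = 0 := by
        have := Finset.single_le_sum (fun i _ => Nat.zero_le (α i)) (Finset.mem_univ j)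
        omega
      rw [this]; simp; positivity
    · have h1 : α j ≤ ∑ i, α i := Finset.single_le_sum (fun i _ => Nat.zero_le (α i)) (Finset.mem_univ j)
      obtain ⟨m, hm⟩ := Nat.exists_eq_succ_of_ne_zero h0.ne'
      rw [hm] at h1 ⊢
      have h2 : (α j : ℝ) ≤ 2 ^ (m + 1) := by
        exact_mod_cast h1.trans (Nat.lt_two_pow_self).le
      simp only [Nat.succ_eq_add_one, Nat.add_sub_cancel]
      calc ‖c α‖ * (α j * (r / 2) ^ m) ≤ ‖c α‖ * (2 ^ (m + 1) * (r / 2) ^ m) := by gcongr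
        _ = 2 / r * (‖c α‖ * r ^ (m + 1)) := by
          rw [div_pow]; field_simp; ring
  have hinj : Function.Injective (fun α : Fin d → ℕ => α + Pi.single j 1) :=
    fun α β h => by simpa using h
  have hsumα : ∀ α : Fin d → ℕ, ∑ i, (α + Pi.single j 1 : Fin d → ℕ) i = (∑ i, α i) + 1 := by
    intro α; simp [Finset.sum_add_distrib]
  refine ⟨r / 2, hr2, ?_, fun x hx => ?_⟩
  · refine (hu.comp_injective hinj).congr fun α => ?_
    simp only [Function.comp, hsumα, norm_mul, Complex.norm_natCast]
    simp only [Pi.add_apply, Pi.single_eq_same, Nat.add_sub_cancel]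
    ring
  · have hxr : x ∈ polydisk d r := fun i => (hx i).trans (by linarith)
    have hd1 : HasFDerivAt f (fderiv ℂ f x) (Function.update x j (x j)) := by
      rw [Function.update_eq_self]; exact (han x hxr).differentiableAt.hasFDerivAt
    have hd2 := hd1.comp_hasDerivAt (x j) (hasDerivAt_update x j (x j))
    set C : (Fin d → ℕ) → ℂ := fun α => c α * ∏ i ∈ Finset.univ.erase j, x i ^ α i with hC
    have hb0 : ∀ α : Fin d → ℕ, ‖C α‖ ≤ ‖c α‖ * (r / 2) ^ (∑ i ∈ Finset.univ.erase j, α i) := by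
      intro α
      rw [hC, norm_mul, norm_prod, ← Finset.prod_pow_eq_pow_sum]
      gcongr with i hi
      rw [norm_pow]
      exact pow_le_pow_left₀ (norm_nonneg _) (hx i).le _
    have hcont : HasDerivAt (fun t => ∑' α, C α * t ^ α j)
        (∑' α, C α * (α j * (x j) ^ (α j - 1))) (x j) := by
      refine hasDerivAt_tsum_of_isPreconnected (t := Metric.ball 0 (r / 2)) (y₀ := x j) hu
        Metric.isOpen_ball (convex_ball _ _).isPreconnected (g := fun α t => C α * t ^ α j)
        (g' := fun α t => C α * (α j * t ^ (α j - 1))) (fun α t ht => ?_) (fun α t ht => ?_)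
        (by simpa using hx j) ?_ (by simpa using hx j)
      · exact (hasDerivAt_pow (α j) t).const_mul _
      · have ht' : ‖t‖ < r / 2 := by simpa using ht
        rcases Nat.eq_zero_or_pos (α j) with h0 | h0
        · rw [h0]; simp
        · have e : ∑ i, α i - 1 = (∑ i ∈ Finset.univ.erase j, α i) + (α j - 1) := by
            rw [← Finset.sum_erase_add _ _ (Finset.mem_univ j)]; omega
          rw [e, norm_mul (C α), norm_mul ((α j : ℕ) : ℂ), norm_pow, Complex.norm_natCast, pow_add]
          calc _ ≤ (‖c α‖ * (r / 2) ^ (∑ i ∈ Finset.univ.erase j, α i)) *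
                (α j * (r / 2) ^ (α j - 1)) := by
                gcongr
                exact hb0 α
            _ = _ := by ring
      · have := (hf x hxr).summable
        refine this.congr fun α => ?_
        have := mono_update x j (x j) α
        rw [Function.update_eq_self] at this
        rw [this, hC]; ring
    have hev : (f ∘ Function.update x j) =ᶠ[nhds (x j)] (fun t => ∑' α, C α * t ^ α j) := by
      filter_upwards [Metric.isOpen_ball.mem_nhds (show x j ∈ Metric.ball 0 r by simpa using hxr j)]
        with t ht
      have ht' : ‖t‖ < r := by simpa using ht
      have := (hf _ (update_mem_polydisk hxr j ht')).tsum_eq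
      simp only [mono_update] at this
      rw [Function.comp, ← this]
      refine tsum_congr fun α => ?_
      rw [hC]; ring
    have hD := hd2.unique (hcont.congr_of_eventuallyEq hev)
    have hsm : Summable (fun α => C α * (α j * (x j) ^ (α j - 1))) := by
      refine Summable.of_norm_bounded hu fun α => ?_
      rcases Nat.eq_zero_or_pos (α j) with h0 | h0
      · rw [h0]; simp
      · have e : ∑ i, α i - 1 = (∑ i ∈ Finset.univ.erase j, α i) + (α j - 1) := by
          rw [← Finset.sum_erase_add _ _ (Finset.mem_univ j)]; omega
        have := (hx j).le
        rw [e, norm_mul (C α), norm_mul ((α j : ℕ) : ℂ), norm_pow, Complex.norm_natCast, pow_add]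
        calc _ ≤ (‖c α‖ * (r / 2) ^ (∑ i ∈ Finset.univ.erase j, α i)) *
              (α j * (r / 2) ^ (α j - 1)) := by
              gcongr
              exact hb0 α
          _ = _ := by ring
    have hS := hsm.hasSum
    rw [← hD] at hS
    rw [← hinj.hasSum_iff] at hS
    · have e : (fun α => C α * (α j * (x j) ^ (α j - 1))) ∘ (fun α : Fin d → ℕ => α + Pi.single j 1)
          = fun α => ((α j + 1 : ℕ) : ℂ) * c (α + Pi.single j 1) * mono x α := by
        funext α
        have h1 := mono_update x j (x j) α
        rw [Function.update_eq_self] at h1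
        rw [h1]
        have h2 : ∏ i ∈ Finset.univ.erase j, x i ^ (α + Pi.single j 1 : Fin d → ℕ) i
            = ∏ i ∈ Finset.univ.erase j, x i ^ α i := by
          refine Finset.prod_congr rfl fun i hi => ?_
          simp [Pi.single_apply, Finset.ne_of_mem_erase hi]
        simp only [Function.comp, hC, h2]
        simp
        ring
      rw [e] at hS
      exact hS
    · intro α hα
      have : α j = 0 := by
        by_contra h
        apply hα
        refine ⟨α - Pi.single j 1, ?_⟩
        funext i
        rcases eq_or_ne i j with rfl | hi
        · simp; omega
        · simp [Pi.single_apply, hi]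
      simp [this]

lemma hasPS_iter {d : ℕ} (j : Fin d) (k : ℕ) {c : (Fin d → ℕ) → ℂ} {f : (Fin d → ℂ) → ℂ}
    (h : HasPS c f) : ∃ m : (Fin d → ℕ) → ℂ, (∀ α, m α ≠ 0) ∧
      HasPS (fun α => m α * c (α + Pi.single j k)) ((pderivCoord j)^[k] f) := by
  induction k with
  | zero => exact ⟨fun _ => 1, fun _ => one_ne_zero, by simpa using h⟩
  | succ k ih =>
    obtain ⟨m, hm, hps⟩ := ih
    refine ⟨fun α => ((α j + 1 : ℕ) : ℂ) * m (α + Pi.single j 1), fun α =>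
      mul_ne_zero (Nat.cast_ne_zero.2 (Nat.succ_ne_zero (α j))) (hm _), ?_⟩
    have := hasPS_deriv hps j
    rw [Function.iterate_succ_apply']
    convert this using 2 with α
    rw [mul_assoc, add_assoc, ← Pi.single_add, add_comm k 1]

lemma hasPS_mixed {d : ℕ} (β : Fin d → ℕ) {c : (Fin d → ℕ) → ℂ} {f : (Fin d → ℂ) → ℂ}
    (h : HasPS c f) : ∃ m : (Fin d → ℕ) → ℂ, (∀ α, m α ≠ 0) ∧
      HasPS (fun α => m α * c (α + β)) (mixedPartial β f) := by
  have key : ∀ l : List (Fin d), ∃ m : (Fin d → ℕ) → ℂ, (∀ α, m α ≠ 0) ∧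
      HasPS (fun α => m α * c (α + (l.map fun j => Pi.single j (β j)).sum))
        (l.foldr (fun j g => (pderivCoord j)^[β j] g) f) := by
    intro l
    induction l with
    | nil => exact ⟨fun _ => 1, fun _ => one_ne_zero, by simpa using h⟩
    | cons j l ih =>
      obtain ⟨m, hm, hps⟩ := ih
      obtain ⟨m', hm', hps'⟩ := hasPS_iter j (β j) hps
      refine ⟨fun α => m' α * m (α + Pi.single j (β j)), fun α => mul_ne_zero (hm' _) (hm _), ?_⟩
      simpa [mul_assoc, add_assoc] using hps'
  have hs : ((List.finRange d).map fun j => (Pi.single j (β j) : Fin d → ℕ)).sum = β := by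
    rw [← List.ofFn_eq_map, List.sum_ofFn]
    exact Finset.univ_sum_single β
  have := key (List.finRange d)
  rw [hs] at this
  exact this

lemma mixedPartial_zero {d : ℕ} (β : Fin d → ℕ) {c : (Fin d → ℕ) → ℂ} {f : (Fin d → ℂ) → ℂ}
    (h : HasPS c f) : mixedPartial β f 0 = 0 ↔ c β = 0 := by
  obtain ⟨m, hm, r, hr, _, hf⟩ := hasPS_mixed β h
  have h0 := hf 0 (fun j => by simpa using hr)
  have h1 := h0.unique (hasSum_single 0 fun α hα => by
    have : mono (0 : Fin d → ℂ) α = 0 := by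
      obtain ⟨j, hj⟩ := Function.ne_iff.1 hα
      exact Finset.prod_eq_zero (Finset.mem_univ j) (by simpa using hj)
    rw [this, mul_zero])
  rw [h1]
  simp [mono, hm 0]

abbrev W (d : ℕ) := lp (fun _ : Fin d → ℕ => ℂ) 1

def sg {d : ℕ} (i : Fin d → ℕ) : W d := lp.single 1 i (1 : ℂ)

lemma sg_norm {d : ℕ} (i : Fin d → ℕ) : ‖sg i‖ = 1 := by
  unfold sg; rw [lp.norm_single (by norm_num)]; simp

lemma W_summable {d : ℕ} (C : W d) : Summable fun i => ‖C i‖ := by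
  have := (lp.memℓp C).summable (by simp)
  simpa using this

lemma W_norm {d : ℕ} (C : W d) : ‖C‖ = ∑' i, ‖C i‖ := by
  have := lp.norm_eq_tsum_rpow (p := 1) (by simp) C
  simpa using this

lemma W_hasSum {d : ℕ} (C : W d) : HasSum (fun i => C i • sg i) C := by
  have := lp.hasSum_single (p := 1) (by simp) C
  convert this using 2 with i
  unfold sg
  rw [← lp.single_smul]; simp

lemma W_mk {d : ℕ} (c : (Fin d → ℕ) → ℂ) (hc : Summable fun i => ‖c i‖) :
    ∃ C : W d, (∀ i, C i = c i) ∧ ‖C‖ = ∑' i, ‖c i‖ := by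
  refine ⟨⟨c, ?_⟩, fun i => rfl, ?_⟩
  · exact memℓp_gen (by simpa using hc)
  · rw [W_norm]

section
variable {E : Type*} [NormedAddCommGroup E] [NormedSpace ℂ E] [CompleteSpace E]

lemma W_smulSummable {d : ℕ} {v : (Fin d → ℕ) → E} {B : ℝ} (hv : ∀ i, ‖v i‖ ≤ B) (C : W d) :
    Summable fun i => ‖C i • v i‖ := by
  refine Summable.of_nonneg_of_le (fun _ => norm_nonneg _) (fun i => ?_) ((W_summable C).mul_right B)
  rw [norm_smul]
  exact mul_le_mul_of_nonneg_left (hv i) (norm_nonneg _)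

lemma W_univ {d : ℕ} (v : (Fin d → ℕ) → E) {B : ℝ} (hv : ∀ i, ‖v i‖ ≤ B) :
    ∃ L : W d →L[ℂ] E, (∀ i, L (sg i) = v i) ∧ (∀ C : W d, L C = ∑' i, C i • v i) ∧
      ∀ C : W d, ‖L C‖ ≤ B * ‖C‖ := by
  let L0 : W d →ₗ[ℂ] E :=
    { toFun := fun C => ∑' i, C i • v i
      map_add' := fun C D => by
        rw [← Summable.tsum_add (W_smulSummable hv C).of_norm (W_smulSummable hv D).of_norm]
        congr 1; ext i; simp [add_smul]
      map_smul' := fun c C => by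
        rw [RingHom.id_apply, ← (W_smulSummable hv C).of_norm.tsum_const_smul]
        congr 1; ext i; simp [mul_smul] }
  have hb : ∀ C : W d, ‖L0 C‖ ≤ B * ‖C‖ := by
    intro C
    refine (norm_tsum_le_tsum_norm (W_smulSummable hv C)).trans ?_
    rw [W_norm, mul_comm, ← tsum_mul_right]
    refine (W_smulSummable hv C).tsum_le_tsum (fun i => ?_) ((W_summable C).mul_right B)
    rw [norm_smul]
    exact mul_le_mul_of_nonneg_left (hv i) (norm_nonneg _)
  refine ⟨L0.mkContinuous B hb, fun i => ?_, fun C => rfl, hb⟩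
  change ∑' k, (sg i : W d) k • v k = v i
  rw [tsum_eq_single i]
  · simp [sg]
  · intro k hk
    simp [sg, Pi.single_eq_of_ne hk]

end

lemma W_ext {F : Type*} [NormedAddCommGroup F] [NormedSpace ℂ F] {d : ℕ}
    {L M : W d →L[ℂ] F} (h : ∀ i, L (sg i) = M (sg i)) : L = M := by
  ext C
  have h1 := (W_hasSum C).mapL L
  have h2 := (W_hasSum C).mapL M
  refine h1.unique ?_
  convert h2 using 2 with i
  simp [h]

lemma mono_le {d : ℕ} {u : Fin d → ℂ} (hu : ∀ j, ‖u j‖ ≤ 1) (i : Fin d → ℕ) : ‖mono u i‖ ≤ 1 := by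
  rw [mono_norm]
  exact Finset.prod_le_one (fun _ _ => by positivity) (fun j _ => pow_le_one₀ (norm_nonneg _) (hu j))

lemma mono_add {d : ℕ} (u : Fin d → ℂ) (i k : Fin d → ℕ) : mono u (i + k) = mono u i * mono u k := by
  unfold mono; rw [← Finset.prod_mul_distrib]; simp [pow_add]

/-- evaluation of a series at `u` -/
def ev {d : ℕ} (u : Fin d → ℂ) (C : W d) : ℂ := ∑' i, C i * mono u i

lemma W_division {d : ℕ} (a : Fin d → ℕ) (CP : W d) (pa : ℂ) (hpa : pa ≠ 0)
    (hC : ‖CP - pa • sg a‖ ≤ ‖pa‖ / 2) (H : W d) :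
    ∃ q r : W d, (∀ u : Fin d → ℂ, (∀ j, ‖u j‖ ≤ 1) → ev u H = ev u CP * ev u q + ev u r) ∧
      (∀ α, a ≤ α → r α = 0) ∧ ‖q‖ ≤ 2 / ‖pa‖ * ‖H‖ ∧ ‖r‖ ≤ 2 * ‖H‖ := by
  classical
  have hpa' : 0 < ‖pa‖ := norm_pos_iff.2 hpa
  have hsg : ∀ g : (Fin d → ℕ) → (Fin d → ℕ), ∀ i, ‖(sg (g i) : W d)‖ ≤ 1 := fun g i => (sg_norm _).le
  have hSh : ∀ β : Fin d → ℕ, ∃ L : W d →L[ℂ] W d, (∀ i, L (sg i) = sg (i + β)) ∧ ‖L‖ ≤ 1 := by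
    intro β
    obtain ⟨L, h1, -, h3⟩ := W_univ (fun i : Fin d → ℕ => sg (i + β)) (hsg _)
    exact ⟨L, h1, L.opNorm_le_bound zero_le_one h3⟩
  choose Sh hSh1 hSh2 using hSh
  obtain ⟨S, hS1, -, hS3⟩ := W_univ (E := W d) (B := 1)
    (fun i : Fin d → ℕ => if a ≤ i then sg (i - a) else 0) (by
      intro i; split_ifs
      · exact (sg_norm _).le
      · simp)
  obtain ⟨T, hT1, hT2, hT3⟩ := W_univ (E := W d) (B := 1)
    (fun i : Fin d → ℕ => if a ≤ i then 0 else sg i) (by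
      intro i; split_ifs
      · simp
      · exact (sg_norm _).le)
  obtain ⟨Mu, hM1, -, hM3⟩ := W_univ (E := W d →L[ℂ] W d) (B := 1) Sh hSh2
  -- decomposition
  have hdec : ∀ C, C = Sh a (S C) + T C := by
    have : ContinuousLinearMap.id ℂ (W d) = (Sh a).comp S + T := by
      apply W_ext
      intro i
      simp only [ContinuousLinearMap.coe_id', id_eq, add_apply,
        ContinuousLinearMap.comp_apply, hS1, hT1]
      split_ifs with h
      · rw [hSh1, tsub_add_cancel_of_le h]; simp
      · simp
    intro C
    exact DFunLike.congr_fun this C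
  have hev : ∀ u : Fin d → ℂ, (∀ j, ‖u j‖ ≤ 1) → ∃ L : W d →L[ℂ] ℂ, (∀ i, L (sg i) = mono u i) ∧
      ∀ C, L C = ev u C := by
    intro u hu
    obtain ⟨L, h1, h2, -⟩ := W_univ (fun i : Fin d → ℕ => mono u i) (mono_le hu)
    exact ⟨L, h1, fun C => by rw [h2]; rfl⟩
  have hMmul : ∀ u : Fin d → ℂ, (∀ j, ‖u j‖ ≤ 1) → ∀ C D, ev u (Mu C D) = ev u C * ev u D := by
    intro u hu C D
    obtain ⟨L, h1, h2⟩ := hev u hu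
    simp only [← h2]
    have e1 : ∀ i, ∀ D, L (Sh i D) = mono u i * L D := by
      intro i D
      have : L.comp (Sh i) = mono u i • L := by
        apply W_ext
        intro k
        simp [hSh1, h1, mono_add, mul_comm]
      simpa using DFunLike.congr_fun this D
    have : L.comp ((ContinuousLinearMap.apply ℂ (W d) D).comp Mu) = (L D) • L := by
      apply W_ext
      intro i
      simp [hM1, e1, h1, mul_comm]
    have := DFunLike.congr_fun this C
    simp at this
    rw [this, mul_comm]
  have hMa : Mu (sg a) = Sh a := hM1 a
  have hTz : ∀ C : W d, ∀ α, a ≤ α → T C α = 0 := by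
    intro C α hα
    have h1 := (W_hasSum C).mapL T
    have h2 : T C = ∑' i, C i • (if a ≤ i then (0 : W d) else sg i) := hT2 C
    have h3 : HasSum (fun i => C i • (if a ≤ i then (0 : W d) else sg i)) (T C) := by
      convert h1 using 2 with i
      simp [hT1]
    have h4 := h3.mapL (lp.evalCLM ℂ (fun _ : Fin d → ℕ => ℂ) 1 α)
    have h5 : ∀ i, (lp.evalCLM ℂ (fun _ : Fin d → ℕ => ℂ) 1 α) (C i • (if a ≤ i then (0 : W d) else sg i)) = 0 := by
      intro i
      split_ifs with h
      · simp
      · have : α ≠ i := fun e => h (e ▸ hα)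
        simp [lp.evalCLM, sg, Pi.single_eq_of_ne this]
    simp only [h5] at h4
    exact h4.unique hasSum_zero
  -- Neumann
  set CP' := CP - pa • sg a with hCP'
  let Kop : W d →L[ℂ] W d := -(pa⁻¹ • (S.comp (Mu CP')))
  have hKn : ‖Kop‖ ≤ 1 / 2 := by
    rw [norm_neg, norm_smul, norm_inv]
    have : ‖S.comp (Mu CP')‖ ≤ 1 * (1 * (‖pa‖ / 2)) := by
      refine (ContinuousLinearMap.opNorm_comp_le _ _).trans ?_
      gcongr
      · exact S.opNorm_le_bound zero_le_one hS3
      · exact (hM3 _).trans (by gcongr)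
    calc ‖pa‖⁻¹ * ‖S.comp (Mu CP')‖ ≤ ‖pa‖⁻¹ * (1 * (1 * (‖pa‖ / 2))) := by gcongr
      _ = 1 / 2 := by field_simp
  have hK1 : ‖Kop‖ < 1 := by linarith
  let Un := Units.oneSub Kop hK1
  let q : W d := (↑Un⁻¹ : W d →L[ℂ] W d) (pa⁻¹ • S H)
  have hq : q - Kop q = pa⁻¹ • S H := by
    have : ((Un : W d →L[ℂ] W d) * (↑Un⁻¹ : W d →L[ℂ] W d)) (pa⁻¹ • S H) = pa⁻¹ • S H := by
      rw [Un.mul_inv]; rfl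
    exact this
  have hq2 : pa • q + S (Mu CP' q) = S H := by
    have h : pa • (q - Kop q) = pa • (pa⁻¹ • S H) := by rw [hq]
    rw [smul_smul, mul_inv_cancel₀ hpa, one_smul] at h
    rw [← h, smul_sub]
    have : pa • Kop q = - S (Mu CP' q) := by
      simp [Kop, smul_smul, mul_inv_cancel₀ hpa]
    rw [this]; abel
  have hSn : ∀ C, ‖S C‖ ≤ ‖C‖ := fun C => by simpa using hS3 C
  have hTn : ∀ C, ‖T C‖ ≤ ‖C‖ := fun C => by simpa using hT3 C
  have hqn : ‖q‖ ≤ 2 / ‖pa‖ * ‖H‖ := by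
    have h1 : ‖q‖ ≤ ‖pa⁻¹ • S H‖ + ‖Kop q‖ := by
      rw [← hq]
      calc ‖q‖ = ‖(q - Kop q) + Kop q‖ := by rw [sub_add_cancel]
        _ ≤ _ := norm_add_le _ _
    have h2 : ‖Kop q‖ ≤ 1 / 2 * ‖q‖ := (Kop.le_opNorm q).trans (by gcongr)
    have h3 : ‖pa⁻¹ • S H‖ ≤ ‖pa‖⁻¹ * ‖H‖ := by
      rw [norm_smul, norm_inv]; gcongr; exact hSn H
    have : 2 / ‖pa‖ * ‖H‖ = 2 * (‖pa‖⁻¹ * ‖H‖) := by ring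
    rw [this]; linarith
  have hMC : ‖Mu CP' q‖ ≤ ‖H‖ := by
    calc ‖Mu CP' q‖ ≤ ‖Mu CP'‖ * ‖q‖ := ContinuousLinearMap.le_opNorm _ _
      _ ≤ (1 * (‖pa‖ / 2)) * (2 / ‖pa‖ * ‖H‖) := by
          gcongr
          exact (hM3 _).trans (by gcongr)
      _ = ‖H‖ := by field_simp
  refine ⟨q, T (H - Mu CP' q), ?_, hTz _, hqn, ?_⟩
  · intro u hu
    have hH : H = Mu CP q + T (H - Mu CP' q) := by
      have h1 : Mu CP q = Mu CP' q + pa • Sh a q := by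
        rw [hCP', map_sub, map_smul, hMa]; simp
      have h2 := hdec (H - Mu CP' q)
      have h3 : S (H - Mu CP' q) = pa • q := by
        rw [map_sub, ← hq2]; abel
      rw [h3, map_smul] at h2
      rw [h1, add_assoc, ← h2]; abel
    rw [← hMmul u hu]
    obtain ⟨L, h1, h2⟩ := hev u hu
    simp only [← h2]
    rw [← map_add, ← hH]
  · calc _ ≤ ‖H - Mu CP' q‖ := hTn _
      _ ≤ ‖H‖ + ‖Mu CP' q‖ := norm_sub_le _ _
      _ ≤ _ := by linarith

lemma ev_norm {d : ℕ} {u : Fin d → ℂ} (hu : ∀ j, ‖u j‖ ≤ 1) (C : W d) : ‖ev u C‖ ≤ ‖C‖ := by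
  obtain ⟨L, h1, h2, h3⟩ := W_univ (fun i : Fin d → ℕ => mono u i) (mono_le hu)
  have := h3 C
  rw [h2] at this
  simpa [ev] using this

lemma ev_add {d : ℕ} {u : Fin d → ℂ} (hu : ∀ j, ‖u j‖ ≤ 1) (C D : W d) :
    ev u (C + D) = ev u C + ev u D := by
  obtain ⟨L, h1, h2, h3⟩ := W_univ (fun i : Fin d → ℕ => mono u i) (mono_le hu)
  have := map_add L C D
  simpa [ev, h2] using this

lemma ev_hasSum {d : ℕ} {u : Fin d → ℂ} (hu : ∀ j, ‖u j‖ ≤ 1) (C : W d) :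
    HasSum (fun i => C i * mono u i) (ev u C) := by
  have := (W_smulSummable (v := fun i : Fin d → ℕ => mono u i) (mono_le hu) C).of_norm
  exact this.hasSum

lemma weights {d : ℕ} {ℓ : Fin d → ℝ} (hℓ : ∀ j, 0 < ℓ j) {p : (Fin d → ℕ) → ℂ} {a : Fin d → ℕ}
    {r0 : ℝ} (hr0 : 0 < r0) (hsum : Summable fun α => ‖p α‖ * r0 ^ (∑ j, α j)) (hpa : p a ≠ 0)
    (hmin : ∀ β, p β ≠ 0 → β ≠ a → ∑ j, ℓ j * (a j : ℝ) < ∑ j, ℓ j * (β j : ℝ)) {δ : ℝ} (hδ : 0 < δ) :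
    ∃ w : Fin d → ℝ, (∀ j, 0 < w j) ∧ (∀ j, w j < δ) ∧
      Summable (fun β => ‖p β‖ * ∏ j, w j ^ β j) ∧
      ∑' β, (if β = a then 0 else ‖p β‖ * ∏ j, w j ^ β j) ≤ ‖p a‖ / 2 * ∏ j, w j ^ a j := by
  have hw : ∀ (τ : ℝ) (β : Fin d → ℕ),
      ∏ j, Real.exp (-τ * ℓ j) ^ β j = Real.exp (-τ * ∑ j, ℓ j * (β j : ℝ)) := by
    intro τ β
    rw [Finset.mul_sum, Real.exp_sum]
    refine Finset.prod_congr rfl fun j _ => ?_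
    rw [← Real.exp_nat_mul]; congr 1; ring
  have hsmall : ∀ ε > 0, ∀ᶠ τ : ℝ in Filter.atTop, ∀ j, Real.exp (-τ * ℓ j) < ε := by
    intro ε hε
    rw [Filter.eventually_all]
    intro j
    have : Filter.Tendsto (fun τ : ℝ => Real.exp (-τ * ℓ j)) Filter.atTop (nhds 0) := by
      apply Real.tendsto_exp_atBot.comp
      exact Filter.Tendsto.atBot_mul_const (hℓ j) Filter.tendsto_neg_atTop_atBot
    exact this.eventually (gt_mem_nhds hε)
  obtain ⟨τ0, hτ0⟩ := (hsmall r0 hr0).exists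
  set La := ∑ j, ℓ j * (a j : ℝ) with hLa
  have hsw : ∀ τ : ℝ, (∀ j, Real.exp (-τ * ℓ j) < r0) →
      Summable (fun β => ‖p β‖ * ∏ j, Real.exp (-τ * ℓ j) ^ β j) := by
    intro τ hτ
    refine Summable.of_nonneg_of_le (fun _ => by positivity) (fun β => ?_) hsum
    rw [← Finset.prod_pow_eq_pow_sum]
    gcongr with j
    exact (hτ j).le
  have hbs : Summable (fun β => Real.exp (τ0 * La) * (‖p β‖ * ∏ j, Real.exp (-τ0 * ℓ j) ^ β j)) :=
    (hsw τ0 hτ0).mul_left _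
  have hlim : Filter.Tendsto (fun τ : ℝ => ∑' β, (if β = a then 0 else
      Real.exp (τ * La) * (‖p β‖ * ∏ j, Real.exp (-τ * ℓ j) ^ β j))) Filter.atTop
      (nhds (∑' _ : Fin d → ℕ, (0 : ℝ))) := by
    refine tendsto_tsum_of_dominated_convergence hbs ?_ ?_
    · intro β
      split_ifs with h
      · exact tendsto_const_nhds
      · by_cases hp : p β = 0
        · simp [hp]
        · have hlt := hmin β hp h
          have e : ∀ τ : ℝ, Real.exp (τ * La) * (‖p β‖ * ∏ j, Real.exp (-τ * ℓ j) ^ β j)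
              = ‖p β‖ * Real.exp (-τ * ((∑ j, ℓ j * (β j : ℝ)) - La)) := by
            intro τ
            rw [hw, mul_left_comm, ← Real.exp_add]; congr 2; ring
          simp only [e]
          rw [← mul_zero ‖p β‖]
          refine Filter.Tendsto.const_mul _ ?_
          apply Real.tendsto_exp_atBot.comp
          exact Filter.Tendsto.atBot_mul_const (by linarith) Filter.tendsto_neg_atTop_atBot
    · filter_upwards [Filter.eventually_ge_atTop τ0] with τ hτ β
      split_ifs with h
      · rw [norm_zero]; positivity
      · rw [Real.norm_of_nonneg (by positivity), hw, hw, mul_left_comm, mul_left_comm (Real.exp (τ0 * La)),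
          ← Real.exp_add, ← Real.exp_add]
        by_cases hp : p β = 0
        · simp [hp]
        · have hlt := hmin β hp h
          refine mul_le_mul_of_nonneg_left (Real.exp_le_exp.2 ?_) (norm_nonneg _)
          nlinarith
  rw [tsum_zero] at hlim
  have hpos : 0 < ‖p a‖ / 2 := by have := norm_pos_iff.2 hpa; linarith
  obtain ⟨τ, h1, h2, h3⟩ := ((hlim.eventually (gt_mem_nhds hpos)).and
    ((hsmall δ hδ).and (hsmall r0 hr0))).exists
  refine ⟨fun j => Real.exp (-τ * ℓ j), fun j => Real.exp_pos _, h2, hsw τ h3, ?_⟩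
  have e2 : ∀ β, (if β = a then 0 else ‖p β‖ * ∏ j, Real.exp (-τ * ℓ j) ^ β j) =
      Real.exp (-τ * La) * (if β = a then 0 else
      Real.exp (τ * La) * (‖p β‖ * ∏ j, Real.exp (-τ * ℓ j) ^ β j)) := by
    intro β
    split_ifs
    · simp
    · rw [← mul_assoc (Real.exp (-τ * La)), ← Real.exp_add]; simp
  simp only [e2]
  rw [tsum_mul_left, hw, mul_comm]
  gcongr

lemma one_dim {p h : ℂ → ℂ} (hp : AnalyticOnNhd ℂ p (Metric.ball 0 2))
    (hh : AnalyticOnNhd ℂ h (Metric.ball 0 2)) (hp1 : ∀ t : ℂ, ‖t‖ = 1 → p t ≠ 0)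
    {N : ℕ} {C θ₁ θ₂ : ℝ} (hθ : θ₁ < θ₂) {G : Set ℂ}
    (hG : ∀ t0 ∈ Metric.ball (0 : ℂ) 2, ∀ᶠ t in nhdsWithin t0 {t0}ᶜ, t ∈ G)
    (hb : ∀ t ∈ Metric.ball (0 : ℂ) 2, t ∈ G → p t ≠ 0 →
      (∃ θ ∈ Set.Ioo θ₁ θ₂, p t = (‖p t‖ : ℂ) * Complex.exp (θ * Complex.I)) →
      ‖h t‖ ≤ C * ‖p t‖ ^ N) :
    h 0 = p 0 ^ N * ((2 * Real.pi : ℝ)⁻¹ • ∫ θ in (0:ℝ)..(2 * Real.pi),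
      h (circleMap 0 1 θ) / p (circleMap 0 1 θ) ^ N) := by
  have hne : ∀ t0 ∈ Metric.ball (0 : ℂ) 2, ¬ (∀ᶠ t in nhds t0, p t = 0) := by
    intro t0 ht0 hz
    have := hp.eqOn_zero_of_preconnected_of_eventuallyEq_zero
      (convex_ball (0 : ℂ) 2).isPreconnected ht0 hz (x := 1) (by simp)
    exact hp1 1 (by simp) this
  have hne2 : ∀ t0 ∈ Metric.ball (0 : ℂ) 2, ∀ᶠ t in nhdsWithin t0 {t0}ᶜ, p t ≠ 0 := by
    intro t0 ht0
    exact (hp t0 ht0).eventually_eq_zero_or_eventually_ne_zero.resolve_left (hne t0 ht0)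
  set g : ℂ → ℂ := fun t => h t / p t ^ N with hg
  have hgm : MeromorphicOn g (Metric.ball 0 2) := by
    intro t ht
    exact (hh t ht).meromorphicAt.fun_div ((hp t ht).meromorphicAt.fun_pow N)
  set k := toMeromorphicNFOn g (Metric.ball 0 2) with hk
  have hord : ∀ t0 ∈ Metric.ball (0 : ℂ) 2, 0 ≤ meromorphicOrderAt g t0 := by
    intro t0 ht0
    by_contra hlt
    push Not at hlt
    have htend := tendsto_cobounded_of_meromorphicOrderAt_neg hlt
    by_cases hpt : p t0 = 0
    · have hev : ∀ᶠ t in nhdsWithin t0 {t0}ᶜ, C < ‖g t‖ := by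
        rw [← tendsto_norm_atTop_iff_cobounded] at htend
        exact htend.eventually (Filter.eventually_gt_atTop C)
      have hball : ∀ᶠ t in nhdsWithin t0 {t0}ᶜ, t ∈ Metric.ball (0 : ℂ) 2 :=
        nhdsWithin_le_nhds (Metric.isOpen_ball.mem_nhds ht0)
      have hall := (hev.and (hball.and (hG t0 ht0)))
      rw [eventually_nhdsWithin_iff] at hall
      have hmap := (hp t0 ht0).eventually_constant_or_nhds_le_map_nhds.resolve_left
        (by rw [hpt]; exact hne t0 ht0)
      rw [hpt] at hmap
      have him := hmap (Filter.image_mem_map hall)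
      set φ := (θ₁ + θ₂) / 2 with hφ
      have hcont : Filter.Tendsto (fun ε : ℝ => (ε : ℂ) * Complex.exp (φ * Complex.I))
          (nhdsWithin 0 (Set.Ioi 0)) (nhds 0) := by
        have : Continuous (fun ε : ℝ => (ε : ℂ) * Complex.exp (φ * Complex.I)) := by fun_prop
        have := this.tendsto 0
        simp only [Complex.ofReal_zero, zero_mul] at this
        exact this.mono_left nhdsWithin_le_nhds
      obtain ⟨ε, ⟨t, htS, hte⟩, hε⟩ := ((hcont.eventually him).and self_mem_nhdsWithin).exists
      have hε' : (0 : ℝ) < ε := hε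
      have hnorm : ‖p t‖ = ε := by
        rw [hte, norm_mul, Complex.norm_exp_ofReal_mul_I]; simp [abs_of_pos hε']
      have hpne : p t ≠ 0 := by rw [← norm_pos_iff, hnorm]; exact hε'
      have htne : t ∈ ({t0}ᶜ : Set ℂ) := by
        intro h'; rw [Set.mem_singleton_iff] at h'; rw [h'] at hpne; exact hpne hpt
      obtain ⟨h1, h2, h3⟩ := htS htne
      have h4 := hb t h2 h3 hpne ⟨φ, ⟨by rw [hφ]; linarith, by rw [hφ]; linarith⟩, by
        rw [hnorm]; exact hte⟩
      have h5 : ‖g t‖ ≤ C := by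
        rw [hg]; simp only [norm_div, norm_pow]
        rw [div_le_iff₀ (by rw [hnorm]; positivity)]; exact h4
      linarith
    · have : AnalyticAt ℂ g t0 := (hh t0 ht0).fun_div ((hp t0 ht0).fun_pow N) (pow_ne_zero _ hpt)
      exact absurd this.meromorphicOrderAt_nonneg (not_le.2 hlt)
  have hka : ∀ t0 ∈ Metric.ball (0 : ℂ) 2, AnalyticAt ℂ k t0 := by
    intro t0 ht0
    rw [← (meromorphicNFOn_toMeromorphicNFOn g (Metric.ball 0 2) ht0).meromorphicOrderAt_nonneg_iff_analyticAt,
      meromorphicOrderAt_toMeromorphicNFOn hgm ht0]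
    exact hord t0 ht0
  have heq : ∀ t0 ∈ Metric.ball (0 : ℂ) 2, h t0 = p t0 ^ N * k t0 := by
    intro t0 ht0
    have h1 : ∀ᶠ t in nhdsWithin t0 {t0}ᶜ, h t = p t ^ N * k t := by
      filter_upwards [hgm.toMeromorphicNFOn_eq_self_on_nhdsNE ht0, hne2 t0 ht0] with t h1 h2
      rw [hk, h1, hg]
      field_simp
    have h2 : Filter.Tendsto h (nhdsWithin t0 {t0}ᶜ) (nhds (h t0)) :=
      (hh t0 ht0).continuousAt.tendsto.mono_left nhdsWithin_le_nhds
    have h3 : Filter.Tendsto (fun t => p t ^ N * k t) (nhdsWithin t0 {t0}ᶜ) (nhds (p t0 ^ N * k t0)) :=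
      (((hp t0 ht0).continuousAt.pow N).mul (hka t0 ht0).continuousAt).tendsto.mono_left nhdsWithin_le_nhds
    exact tendsto_nhds_unique (h2.congr' h1) h3
  have hsub : Metric.closedBall (0 : ℂ) |1| ⊆ Metric.ball 0 2 := by
    apply Metric.closedBall_subset_ball; norm_num
  have hav : Real.circleAverage k 0 1 = k 0 := by
    refine circleAverage_of_differentiable_on_off_countable (s := ∅) Set.countable_empty ?_ ?_
    · intro t ht; exact (hka t (hsub ht)).continuousAt.continuousWithinAt
    · intro t ht; exact (hka t (hsub (Metric.ball_subset_closedBall ht.1))).differentiableAt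
  rw [heq 0 (by simp), ← hav, Real.circleAverage_def]
  congr 2
  refine intervalIntegral.integral_congr fun θ _ => ?_
  have hn : ‖circleMap 0 1 θ‖ = 1 := by simp
  have hin : circleMap 0 1 θ ∈ Metric.ball (0 : ℂ) 2 := by simp
  have := heq _ hin
  have h0 := hp1 _ hn
  rw [this]; field_simp

lemma divis {d : ℕ} {P : (Fin d → ℂ) → ℂ} {R ρ ρ' m θ₁ θ₂ M C : ℝ} {N : ℕ} {w : Fin d → ℝ}
    (hθ : θ₁ < θ₂) (hw : ∀ j, 0 < w j) (hw2 : ∀ j, w j < ρ / 4) (hρR : ρ ≤ R)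
    (hρ' : 0 < ρ') (hρ'ρ : ρ' ≤ ρ / 4) (hP : AnalyticOnNhd ℂ P (polydisk d ρ)) (hm : 0 < m)
    (hPm : ∀ x ∈ polydisk d ρ', ∀ ζ : ℂ, ‖ζ‖ = 1 → m ≤ ‖P (x + fun j => ζ * w j)‖)
    {h : (Fin d → ℂ) → ℂ} (hh : AnalyticOnNhd ℂ h (polydisk d ρ))
    (hM : ∀ x ∈ polydisk d ρ, ‖h x‖ ≤ M)
    (hb : ∀ x ∈ PSector d P θ₁ θ₂ R ∩ polydisk d ρ, ‖h x‖ ≤ C * ‖P x‖ ^ N) :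
    ∃ q : (Fin d → ℂ) → ℂ, SepHol d ρ' q ∧ (∀ x ∈ polydisk d ρ', ‖q x‖ ≤ M / m ^ N) ∧
      ∀ x ∈ polydisk d ρ', h x = P x ^ N * q x := by
  have hmem : ∀ x ∈ polydisk d ρ', ∀ t : ℂ, ‖t‖ < 2 → (x + fun j => t * w j) ∈ polydisk d ρ := by
    intro x hx t ht j
    have h1 := hx j
    have h2 := hw2 j
    have h3 := hw j
    calc ‖x j + t * w j‖ ≤ ‖x j‖ + ‖t‖ * w j := by
          refine (norm_add_le _ _).trans ?_
          rw [norm_mul, Complex.norm_real, Real.norm_of_nonneg h3.le]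
      _ < ρ := by nlinarith
  let F : (Fin d → ℂ) → ℝ → ℂ := fun x θ =>
    h (x + fun j => circleMap 0 1 θ * w j) / P (x + fun j => circleMap 0 1 θ * w j) ^ N
  have hcn : ∀ θ, ‖circleMap 0 1 θ‖ = 1 := fun θ => by simp
  have hc2 : ∀ θ, ‖circleMap 0 1 θ‖ < 2 := fun θ => by rw [hcn]; norm_num
  have hPne : ∀ x ∈ polydisk d ρ', ∀ ζ : ℂ, ‖ζ‖ = 1 → P (x + fun j => ζ * w j) ≠ 0 := by
    intro x hx ζ hζ
    rw [← norm_pos_iff]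
    exact hm.trans_le (hPm x hx ζ hζ)
  have hFb : ∀ x ∈ polydisk d ρ', ∀ θ, ‖F x θ‖ ≤ M / m ^ N := by
    intro x hx θ
    have h1 := hM _ (hmem x hx _ (hc2 θ))
    have h2 := hPm x hx _ (hcn θ)
    simp only [F, norm_div, norm_pow]
    have hM0 : 0 ≤ M := (norm_nonneg _).trans h1
    gcongr
  have hFc : ∀ x ∈ polydisk d ρ', Continuous (F x) := by
    intro x hx
    have hcont : Continuous fun θ : ℝ => (x + fun j => circleMap 0 1 θ * (w j : ℂ)) := by
      have := continuous_circleMap 0 1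
      fun_prop
    rw [continuous_iff_continuousAt]
    intro θ
    refine ContinuousAt.div ?_ ?_ ?_
    · exact ContinuousAt.comp (g := h) (f := fun θ : ℝ => (x + fun j => circleMap 0 1 θ * (w j : ℂ))) (hh _ (hmem x hx _ (hc2 θ))).continuousAt hcont.continuousAt
    · exact (ContinuousAt.comp (g := P) (f := fun θ : ℝ => (x + fun j => circleMap 0 1 θ * (w j : ℂ))) (hP _ (hmem x hx _ (hc2 θ))).continuousAt
        hcont.continuousAt).pow N
    · exact pow_ne_zero _ (hPne x hx _ (hcn θ))
  have hFd : ∀ θ, SepHol d ρ' (fun x => F x θ) := by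
    intro θ
    apply sepHol_of_analytic
    intro x hx
    have ht : AnalyticAt ℂ (fun y : Fin d → ℂ => y + fun j => circleMap 0 1 θ * (w j : ℂ)) x :=
      analyticAt_id.fun_add analyticAt_const
    exact (AnalyticAt.comp' (g := h) (f := fun y : Fin d → ℂ => y + fun j => circleMap 0 1 θ * (w j : ℂ)) (hh _ (hmem x hx _ (hc2 θ))) ht).fun_div
      ((AnalyticAt.comp' (g := P) (f := fun y : Fin d → ℂ => y + fun j => circleMap 0 1 θ * (w j : ℂ)) (hP _ (hmem x hx _ (hc2 θ))) ht).fun_pow N)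
      (pow_ne_zero _ (hPne x hx _ (hcn θ)))
  refine ⟨fun x => (2 * Real.pi : ℝ)⁻¹ • ∫ θ in (0:ℝ)..(2 * Real.pi), F x θ, ?_, ?_, ?_⟩
  · intro x hx j
    exact (sepHol_par hFc hFd hFb x hx j).fun_const_smul _
  · intro x hx
    have := intervalIntegral.norm_integral_le_of_norm_le_const (a := 0) (b := 2 * Real.pi)
      (f := F x) (C := M / m ^ N) (fun θ _ => hFb x hx θ)
    have hpi := Real.pi_pos
    rw [norm_smul, norm_inv, Real.norm_of_nonneg (by positivity)]
    rw [sub_zero, abs_of_pos (by positivity)] at this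
    calc _ ≤ (2 * Real.pi)⁻¹ * (M / m ^ N * (2 * Real.pi)) := by gcongr
      _ = _ := by field_simp
  · intro x hx
    have hline : ∀ t : ℂ, AnalyticAt ℂ (fun t : ℂ => x + fun j => t * (w j : ℂ)) t := by
      intro t
      refine analyticAt_const.fun_add ?_
      rw [analyticAt_pi_iff]
      intro j
      exact analyticAt_id.fun_mul analyticAt_const
    have key := one_dim (p := fun t => P (x + fun j => t * w j)) (h := fun t => h (x + fun j => t * w j))
      (N := N) (C := C) (θ₁ := θ₁) (θ₂ := θ₂) (G := {t | ∀ j, x j + t * w j ≠ 0})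
      (fun t ht => AnalyticAt.comp' (g := P) (hP _ (hmem x hx t (by simpa using ht))) (hline t))
      (fun t ht => AnalyticAt.comp' (g := h) (hh _ (hmem x hx t (by simpa using ht))) (hline t))
      (hPne x hx) hθ ?_ ?_
    · have e : (x + fun j => (0 : ℂ) * (w j : ℂ)) = x := by ext j; simp
      simpa only [e] using key
    · intro t0 _
      simp only [Set.mem_setOf_eq]
      rw [Filter.eventually_all]
      intro j
      have hwj : (w j : ℂ) ≠ 0 := by exact_mod_cast (hw j).ne'
      by_cases h0 : x j + t0 * w j = 0
      · filter_upwards [self_mem_nhdsWithin] with t ht h1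
        apply ht
        have : (t - t0) * w j = 0 := by linear_combination h1 - h0
        rcases mul_eq_zero.1 this with h | h
        · exact sub_eq_zero.1 h
        · exact absurd h hwj
      · apply nhdsWithin_le_nhds
        have : ContinuousAt (fun t : ℂ => x j + t * w j) t0 := by fun_prop
        exact this.eventually_ne h0
    · intro t ht hG hne hex
      have hin := hmem x hx t (by simpa using ht)
      refine hb _ ⟨⟨fun j => ⟨norm_pos_iff.2 (hG j), (hin j).trans_le hρR⟩, hne, hex⟩, hin⟩

lemma exists_coef {d : ℕ} {ρ M : ℝ} (hρ : 0 < ρ) {q : (Fin d → ℂ) → ℂ} (hq : SepHol d ρ q)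
    (hM : ∀ x ∈ polydisk d ρ, ‖q x‖ ≤ M) :
    ∃ c : (Fin d → ℕ) → ℂ, (Summable fun α => ‖c α‖ * (ρ / 4) ^ (∑ j, α j)) ∧
      (∀ x ∈ polydisk d (ρ / 4), HasSum (fun α => c α * mono x α) (q x)) ∧
      ∀ w : Fin d → ℝ, (∀ j, 0 < w j) → (∀ j, w j ≤ ρ / 4) → ∃ Q : W d,
        (∀ α, Q α = c α * ((∏ j, w j ^ α j : ℝ) : ℂ)) ∧
        ‖Q‖ ≤ M * (∑' α : Fin d → ℕ, ∏ j, (1 / 2 : ℝ) ^ α j) ∧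
        ∀ u : Fin d → ℂ, (∀ j, ‖u j‖ ≤ 1) → ev u Q = q (fun j => u j * w j) := by
  obtain ⟨c, hc1, hc2⟩ := osgood (half_pos hρ) (half_lt_self hρ) hq hM
  have hM0 : 0 ≤ M := (norm_nonneg _).trans (hM 0 (by intro j; simpa using hρ))
  have hgs : Summable fun α : Fin d → ℕ => ∏ j, (1 / 2 : ℝ) ^ α j :=
    summable_geom (fun _ => 1 / 2) (fun _ => by norm_num) (fun _ => by norm_num)
  have hb : ∀ w : Fin d → ℝ, (∀ j, 0 < w j) → (∀ j, w j ≤ ρ / 4) → ∀ α,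
      ‖c α‖ * ∏ j, w j ^ α j ≤ M * ∏ j, (1 / 2 : ℝ) ^ α j := by
    intro w hw hw2 α
    have hp : 0 ≤ ∏ j, w j ^ α j := Finset.prod_nonneg fun j _ => pow_nonneg (hw j).le _
    calc ‖c α‖ * ∏ j, w j ^ α j ≤ (M * ∏ j, ((ρ / 2)⁻¹) ^ α j) * ∏ j, w j ^ α j := by
          gcongr; exact hc1 α
      _ = M * ∏ j, ((ρ / 2)⁻¹ * w j) ^ α j := by
          rw [mul_assoc, ← Finset.prod_mul_distrib]; simp only [mul_pow]
      _ ≤ M * ∏ j, (1 / 2 : ℝ) ^ α j := by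
          gcongr with j
          · intro j _; have := hw j; positivity
          · have := hw j; positivity
          · rw [inv_mul_le_iff₀ (by positivity)]; linarith [hw2 j]
  refine ⟨c, ?_, ?_, ?_⟩
  · refine Summable.of_nonneg_of_le (fun _ => by positivity) (fun α => ?_) (hgs.mul_left M)
    have := hb (fun _ => ρ / 4) (fun _ => by linarith) (fun _ => le_rfl) α
    rwa [Finset.prod_pow_eq_pow_sum] at this
  · intro x hx
    exact hc2 x fun j => (hx j).trans (by linarith)
  · intro w hw hw2
    have hn : ∀ α, ‖c α * ((∏ j, w j ^ α j : ℝ) : ℂ)‖ = ‖c α‖ * ∏ j, w j ^ α j := by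
      intro α
      rw [norm_mul, Complex.norm_real, Real.norm_of_nonneg]
      exact Finset.prod_nonneg fun j _ => pow_nonneg (hw j).le _
    have hs : Summable fun α => ‖c α * ((∏ j, w j ^ α j : ℝ) : ℂ)‖ := by
      refine Summable.of_nonneg_of_le (fun _ => norm_nonneg _) (fun α => ?_) (hgs.mul_left M)
      rw [hn]; exact hb w hw hw2 α
    obtain ⟨Q, hQ1, hQ2⟩ := W_mk _ hs
    refine ⟨Q, hQ1, ?_, ?_⟩
    · rw [hQ2, ← tsum_mul_left]
      refine hs.tsum_le_tsum (fun α => ?_) (hgs.mul_left M)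
      rw [hn]; exact hb w hw hw2 α
    · intro u hu
      have hx : (fun j => u j * (w j : ℂ)) ∈ polydisk d (ρ / 2) := by
        intro j
        have h1 := hu j
        have h2 := hw j
        have h3 := hw2 j
        simp only [norm_mul, Complex.norm_real, Real.norm_of_nonneg h2.le]
        nlinarith
      refine (ev_hasSum hu Q).unique ?_
      convert hc2 _ hx using 2 with α
      rw [hQ1, mul_assoc]
      congr 1
      simp only [mono, mul_pow, Finset.prod_mul_distrib]
      push_cast
      ring

lemma ev_sg {d : ℕ} (u : Fin d → ℂ) (p : ℂ) (a : Fin d → ℕ) : ev u (p • sg a) = p * mono u a := by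
  unfold ev
  rw [tsum_eq_single a]
  · simp [sg]
  · intro k hk; simp [sg, Pi.single_eq_of_ne hk]

lemma P_weights {d : ℕ} {ℓ : Fin d → ℝ} (hℓpos : ∀ j, 0 < ℓ j) {R : ℝ} (hR : 0 < R)
    {P : (Fin d → ℂ) → ℂ} (hP : AnalyticOnNhd ℂ P (polydisk d R)) (hP0 : P 0 = 0)
    {a : Fin d → ℕ} (ha : mixedPartial a P 0 ≠ 0)
    (hamin : ∀ β : Fin d → ℕ, mixedPartial β P 0 ≠ 0 → β ≠ a →
      ∑ j, ℓ j * (a j : ℝ) < ∑ j, ℓ j * (β j : ℝ)) :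
    ∃ ρP > 0, ρP ≤ R ∧ (∀ x ∈ polydisk d ρP, ‖P x‖ ≤ 1) ∧ ∀ δ > 0, ∃ (w : Fin d → ℝ) (CP : W d) (pa : ℂ),
      (∀ j, 0 < w j) ∧ (∀ j, w j < δ) ∧ pa ≠ 0 ∧ ‖CP - pa • sg a‖ ≤ ‖pa‖ / 2 ∧
      ∀ u : Fin d → ℂ, (∀ j, ‖u j‖ ≤ 1) → ev u CP = P (fun j => u j * w j) := by
  have h0 : (0 : Fin d → ℂ) ∈ polydisk d R := by intro j; simpa using hR
  have hcont := (hP 0 h0).continuousAt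
  have hev : ∀ᶠ x in nhds (0 : Fin d → ℂ), ‖P x‖ < 1 := by
    have : Filter.Tendsto (fun x => ‖P x‖) (nhds 0) (nhds ‖P 0‖) := hcont.norm
    rw [hP0, norm_zero] at this
    exact this.eventually (gt_mem_nhds one_pos)
  obtain ⟨ε, hε, hεb⟩ := Metric.eventually_nhds_iff_ball.1 hev
  have hρ : 0 < min ε R := lt_min hε hR
  have hPb : ∀ x ∈ polydisk d (min ε R), ‖P x‖ ≤ 1 := by
    intro x hx
    refine (hεb x ?_).le
    rw [← polydisk_eq_ball hε]
    exact fun j => (hx j).trans_le (min_le_left _ _)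
  refine ⟨min ε R, hρ, min_le_right _ _, hPb, ?_⟩
  have hPan : AnalyticOnNhd ℂ P (polydisk d (min ε R)) :=
    fun x hx => hP x fun j => (hx j).trans_le (min_le_right _ _)
  obtain ⟨c, hc1, hc2, hc3⟩ := exists_coef hρ (sepHol_of_analytic hPan) hPb
  have hps : HasPS c P := ⟨_, by positivity, hc1, hc2⟩
  have hca : c a ≠ 0 := fun h => ha ((mixedPartial_zero a hps).2 h)
  have hcmin : ∀ β, c β ≠ 0 → β ≠ a → ∑ j, ℓ j * (a j : ℝ) < ∑ j, ℓ j * (β j : ℝ) :=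
    fun β hβ => hamin β fun h => hβ ((mixedPartial_zero β hps).1 h)
  intro δ hδ
  obtain ⟨w, hw1, hw2, hw3, hw4⟩ := weights hℓpos (by positivity : 0 < min ε R / 4) hc1 hca hcmin
    (lt_min hδ (by positivity : 0 < min ε R / 4))
  obtain ⟨CP, hC1, -, hC3⟩ := hc3 w hw1 fun j => ((hw2 j).trans_le (min_le_right _ _)).le
  have hpp : ∀ α : Fin d → ℕ, 0 < ∏ j, w j ^ α j := fun α => Finset.prod_pos fun j _ => pow_pos (hw1 j) _
  refine ⟨w, CP, CP a, hw1, fun j => (hw2 j).trans_le (min_le_left _ _), ?_, ?_, hC3⟩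
  · rw [hC1]
    exact mul_ne_zero hca (by exact_mod_cast (hpp a).ne')
  · rw [W_norm]
    have e : ∀ α, ‖(CP - CP a • sg a : W d) α‖ = if α = a then 0 else ‖c α‖ * ∏ j, w j ^ α j := by
      intro α
      have e0 : (CP - CP a • sg a : W d) α = CP α - CP a * (sg a : W d) α := rfl
      split_ifs with h
      · subst h; rw [e0]; simp [sg]
      · have : (CP - CP a • sg a : W d) α = CP α := by
          rw [e0]; simp [sg, Pi.single_eq_of_ne h]
        rw [this, hC1, norm_mul, Complex.norm_real, Real.norm_of_nonneg (hpp α).le]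
    simp only [e]
    rw [hC1 a, norm_mul, Complex.norm_real, Real.norm_of_nonneg (hpp a).le]
    refine hw4.trans (le_of_eq ?_)
    ring

lemma tube {d : ℕ} {P : (Fin d → ℂ) → ℂ} {ρ : ℝ} (hρ : 0 < ρ) (hP : AnalyticOnNhd ℂ P (polydisk d ρ))
    {a : Fin d → ℕ} {w : Fin d → ℝ} {CP : W d} {pa : ℂ} (hw : ∀ j, 0 < w j) (hw2 : ∀ j, w j < ρ / 4)
    (hpa : pa ≠ 0) (hC : ‖CP - pa • sg a‖ ≤ ‖pa‖ / 2)
    (hev : ∀ u : Fin d → ℂ, (∀ j, ‖u j‖ ≤ 1) → ev u CP = P (fun j => u j * w j)) :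
    ∃ ρ' m : ℝ, 0 < ρ' ∧ ρ' ≤ ρ / 4 ∧ 0 < m ∧
      ∀ x ∈ polydisk d ρ', ∀ ζ : ℂ, ‖ζ‖ = 1 → m ≤ ‖P (x + fun j => ζ * w j)‖ := by
  have hpa' : 0 < ‖pa‖ := norm_pos_iff.2 hpa
  have hlow : ∀ ζ : ℂ, ‖ζ‖ = 1 → ‖pa‖ / 2 ≤ ‖P (0 + fun j => ζ * w j)‖ := by
    intro ζ hζ
    have hu : ∀ j : Fin d, ‖(fun _ => ζ : Fin d → ℂ) j‖ ≤ 1 := fun _ => hζ.le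
    rw [zero_add, ← hev (fun _ => ζ) hu]
    have h1 : ev (fun _ => ζ) CP = ev (fun _ => ζ) (CP - pa • sg a) + pa * mono (fun _ => ζ) a := by
      rw [← ev_sg, ← ev_add hu, sub_add_cancel]
    have h2 := (ev_norm hu (CP - pa • sg a)).trans hC
    have h3 : ‖pa * mono (fun _ => ζ) a‖ = ‖pa‖ := by
      rw [norm_mul, mono_norm]; simp [hζ]
    have h4 : ‖pa * mono (fun _ => ζ) a‖ ≤ ‖ev (fun _ => ζ) CP‖ + ‖ev (fun _ => ζ) (CP - pa • sg a)‖ := by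
      have : pa * mono (fun _ => ζ) a = ev (fun _ => ζ) CP - ev (fun _ => ζ) (CP - pa • sg a) := by
        rw [h1]; ring
      rw [this]; exact norm_sub_le _ _
    linarith
  have key : ∀ᶠ x in nhds (0 : Fin d → ℂ), ∀ ζ ∈ Metric.sphere (0 : ℂ) 1,
      ‖pa‖ / 4 < ‖P (x + fun j => ζ * w j)‖ := by
    refine IsCompact.eventually_forall_of_forall_eventually (isCompact_sphere _ _) fun ζ hζ => ?_
    have hζ1 : ‖ζ‖ = 1 := by simpa using hζ
    have hin : ((0 : Fin d → ℂ) + fun j => ζ * (w j : ℂ)) ∈ polydisk d ρ := by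
      intro j
      have h2 := hw2 j
      have h3 := hw j
      simp only [zero_add, norm_mul, Complex.norm_real, Real.norm_of_nonneg h3.le, hζ1]
      linarith
    have hc : ContinuousAt (fun z : (Fin d → ℂ) × ℂ => ‖P (z.1 + fun j => z.2 * (w j : ℂ))‖) (0, ζ) := by
      refine ContinuousAt.norm ?_
      refine ContinuousAt.comp (g := P) (f := fun z : (Fin d → ℂ) × ℂ => z.1 + fun j => z.2 * (w j : ℂ))
        (hP _ hin).continuousAt ?_
      have : Continuous (fun z : (Fin d → ℂ) × ℂ => z.1 + fun j => z.2 * (w j : ℂ)) := by fun_prop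
      exact this.continuousAt
    refine hc.eventually (lt_mem_nhds ?_)
    have := hlow ζ hζ1
    simp only
    linarith
  obtain ⟨ε, hε, hεb⟩ := Metric.eventually_nhds_iff_ball.1 key
  refine ⟨min ε (ρ / 4), ‖pa‖ / 4, by positivity, min_le_right _ _, by positivity, ?_⟩
  intro x hx ζ hζ
  refine (hεb x ?_ ζ (by simpa using hζ)).le
  rw [← polydisk_eq_ball hε]
  exact fun j => (hx j).trans_le (min_le_left _ _)

lemma stage1 {d : ℕ} {s : ℝ} (hs : 0 < s) {R : ℝ} 
    {P : (Fin d → ℂ) → ℂ} (hP : AnalyticOnNhd ℂ P (polydisk d R)) {a : Fin d → ℕ}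
    {ρP : ℝ} (hρP : 0 < ρP) (hρPR : ρP ≤ R) (hPb : ∀ x ∈ polydisk d ρP, ‖P x‖ ≤ 1)
    (hPw : ∀ δ > 0, ∃ (w : Fin d → ℝ) (CP : W d) (pa : ℂ),
      (∀ j, 0 < w j) ∧ (∀ j, w j < δ) ∧ pa ≠ 0 ∧ ‖CP - pa • sg a‖ ≤ ‖pa‖ / 2 ∧
      ∀ u : Fin d → ℂ, (∀ j, ‖u j‖ ≤ 1) → ev u CP = P (fun j => u j * w j))
    {θ₁ θ₂ : ℝ} (hθ : θ₁ < θ₂) {f : (Fin d → ℂ) → ℂ}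
    {ρ₁ : ℝ} (hρ₁ : 0 < ρ₁) {F : ℕ → (Fin d → ℂ) → ℂ} {K₀ A₀ : ℝ} (hK₀ : 0 < K₀) (hA₀ : 0 < A₀)
    (hfseqA : ∀ n, AnalyticOnNhd ℂ (F n) (polydisk d ρ₁))
    (hfseqB : ∀ n : ℕ, ∀ x ∈ polydisk d ρ₁, ‖F n x‖ ≤ K₀ * A₀ ^ n * Real.Gamma (s * n + 1))
    (hest : ∀ n : ℕ, ∀ x ∈ PSector d P θ₁ θ₂ R ∩ polydisk d ρ₁,
      ‖f x - F n x‖ ≤ K₀ * A₀ ^ n * Real.Gamma (s * n + 1) * ‖P x‖ ^ n) :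
    ∃ ρ' K A : ℝ, 0 < ρ' ∧ ρ' ≤ ρ₁ ∧ 0 < K ∧ 0 < A ∧ ∃ q : ℕ → (Fin d → ℂ) → ℂ,
      (∀ n, SepHol d ρ' (q n)) ∧
      (∀ n : ℕ, ∀ x ∈ polydisk d ρ', ‖q n x‖ ≤ K * A ^ n * Real.Gamma (s * n + 1)) ∧
      ∀ n, ∀ x ∈ polydisk d ρ', F (n + 1) x - F n x = P x ^ n * q n x := by
  set ρ := min ρ₁ ρP with hρdef
  have hρ : 0 < ρ := lt_min hρ₁ hρP
  have hρ1 : ρ ≤ ρ₁ := min_le_left _ _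
  have hρ2 : ρ ≤ ρP := min_le_right _ _
  have hPan : AnalyticOnNhd ℂ P (polydisk d ρ) :=
    fun x hx => hP x fun j => (hx j).trans_le (hρ2.trans hρPR)
  obtain ⟨w, CP, pa, hw1, hw2, hpa, hC, hev⟩ := hPw (ρ / 4) (by positivity)
  obtain ⟨ρ', m, hρ', hρ'ρ, hm, hPm⟩ := tube hρ hPan hw1 hw2 hpa hC hev
  obtain ⟨C₁, B₁, hC₁, hB₁, hgr⟩ := gam_growth hs
  have hγ : ∀ n : ℕ, 0 < Real.Gamma (s * n + 1) := fun n => Real.Gamma_pos_of_pos (by positivity)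
  set Mn : ℕ → ℝ := fun n => K₀ * A₀ ^ (n + 1) * Real.Gamma (s * (n + 1 : ℕ) + 1)
    + K₀ * A₀ ^ n * Real.Gamma (s * n + 1) with hMn
  have hdiv : ∀ n, ∃ q : (Fin d → ℂ) → ℂ, SepHol d ρ' q ∧ (∀ x ∈ polydisk d ρ', ‖q x‖ ≤ Mn n / m ^ n) ∧
      ∀ x ∈ polydisk d ρ', F (n + 1) x - F n x = P x ^ n * q x := by
    intro n
    have hsub : polydisk d ρ ⊆ polydisk d ρ₁ := fun x hx j => (hx j).trans_le hρ1
    refine divis (h := fun x => F (n + 1) x - F n x) (C := Mn n) hθ hw1 hw2 (hρ2.trans hρPR) hρ' hρ'ρ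
      hPan hm hPm ?_ ?_ ?_
    · exact fun x hx => (hfseqA (n + 1) x (hsub hx)).fun_sub (hfseqA n x (hsub hx))
    · intro x hx
      exact (norm_sub_le _ _).trans (add_le_add (hfseqB (n + 1) x (hsub hx)) (hfseqB n x (hsub hx)))
    · intro x hx
      have h1 := hest (n + 1) x ⟨hx.1, hsub hx.2⟩
      have h2 := hest n x ⟨hx.1, hsub hx.2⟩
      have h3 : ‖P x‖ ≤ 1 := hPb x fun j => (hx.2 j).trans_le hρ2
      have h4 : F (n + 1) x - F n x = (f x - F n x) - (f x - F (n + 1) x) := by ring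
      have hg := hγ (n + 1)
      calc ‖F (n + 1) x - F n x‖ ≤ ‖f x - F n x‖ + ‖f x - F (n + 1) x‖ := by
            rw [h4]; exact norm_sub_le _ _
        _ ≤ K₀ * A₀ ^ n * Real.Gamma (s * n + 1) * ‖P x‖ ^ n +
            K₀ * A₀ ^ (n + 1) * Real.Gamma (s * (n + 1 : ℕ) + 1) * ‖P x‖ ^ n := by
            refine add_le_add h2 (h1.trans ?_)
            refine mul_le_mul_of_nonneg_left ?_ (by positivity)
            exact pow_le_pow_of_le_one (norm_nonneg _) h3 (Nat.le_succ n)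
        _ = Mn n * ‖P x‖ ^ n := by rw [hMn]; ring
  choose q hq1 hq2 hq3 using hdiv
  refine ⟨ρ', K₀ * (A₀ * C₁ + 1), A₀ * B₁ / m, hρ', by linarith, by positivity, by positivity,
    q, hq1, ?_, hq3⟩
  intro n x hx
  refine (hq2 n x hx).trans ?_
  rw [div_pow, div_le_iff₀ (by positivity)]
  have hg := hγ n
  have hB1 : 1 ≤ B₁ ^ n := one_le_pow₀ hB₁
  calc Mn n ≤ K₀ * A₀ ^ (n + 1) * (C₁ * B₁ ^ n * Real.Gamma (s * n + 1))
        + K₀ * A₀ ^ n * (B₁ ^ n * Real.Gamma (s * n + 1)) := by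
        rw [hMn]
        refine add_le_add ?_ ?_
        · exact mul_le_mul_of_nonneg_left (hgr n) (by positivity)
        · refine mul_le_mul_of_nonneg_left ?_ (by positivity)
          nlinarith
    _ = _ := by field_simp; ring

lemma stage2 {d : ℕ} (hd : 1 ≤ d) {s : ℝ} (hs : 0 < s)
    {P : (Fin d → ℂ) → ℂ} {a : Fin d → ℕ}
    (hPw : ∀ δ > 0, ∃ (w : Fin d → ℝ) (CP : W d) (pa : ℂ),
      (∀ j, 0 < w j) ∧ (∀ j, w j < δ) ∧ pa ≠ 0 ∧ ‖CP - pa • sg a‖ ≤ ‖pa‖ / 2 ∧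
      ∀ u : Fin d → ℂ, (∀ j, ‖u j‖ ≤ 1) → ev u CP = P (fun j => u j * w j))
    {ρ' K A : ℝ} (hρ' : 0 < ρ') (hK : 0 < K) (hA : 0 < A) {q : ℕ → (Fin d → ℂ) → ℂ}
    (hq1 : ∀ n, SepHol d ρ' (q n))
    (hq2 : ∀ n : ℕ, ∀ x ∈ polydisk d ρ', ‖q n x‖ ≤ K * A ^ n * Real.Gamma (s * n + 1)) :
    ∃ ρ > 0, ρ ≤ ρ' ∧ ∃ g t : ℕ → (Fin d → ℂ) → ℂ, ∃ K' A' : ℝ, 0 < K' ∧ 0 < A' ∧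
      (∀ n, AnalyticOnNhd ℂ (g n) (polydisk d ρ)) ∧
      (∀ n, ∀ β : Fin d → ℕ, (∀ j, a j ≤ β j) → mixedPartial β (g n) 0 = 0) ∧
      (∀ n : ℕ, ∀ x ∈ polydisk d ρ, ‖g n x‖ ≤ K' * A' ^ n * Real.Gamma (s * n + 1)) ∧
      (∀ n : ℕ, ∀ x ∈ polydisk d ρ, ‖t n x‖ ≤ K' * A' ^ n * Real.Gamma (s * n + 1)) ∧
      (∀ x ∈ polydisk d ρ, t 0 x = 0) ∧
      ∀ n, ∀ x ∈ polydisk d ρ, q n x + t n x = P x * t (n + 1) x + g n x := by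
  obtain ⟨w, CP, pa, hw1, hw2, hpa, hC, hev⟩ := hPw (ρ' / 4) (by positivity)
  have hγ : ∀ n : ℕ, 0 < Real.Gamma (s * n + 1) := fun n => Real.Gamma_pos_of_pos (by positivity)
  have hpa' : 0 < ‖pa‖ := norm_pos_iff.2 hpa
  set G : ℝ := ∑' α : Fin d → ℕ, ∏ j, (1 / 2 : ℝ) ^ α j with hG
  have hG0 : 0 ≤ G := tsum_nonneg fun α => by positivity
  have hQex : ∀ n : ℕ, ∃ Q : W d, ‖Q‖ ≤ K * A ^ n * Real.Gamma (s * n + 1) * G ∧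
      ∀ u : Fin d → ℂ, (∀ j, ‖u j‖ ≤ 1) → ev u Q = q n (fun j => u j * w j) := by
    intro n
    obtain ⟨c, -, -, h⟩ := exists_coef hρ' (hq1 n) (hq2 n)
    obtain ⟨Q, -, h2, h3⟩ := h w hw1 fun j => (hw2 j).le
    exact ⟨Q, h2, h3⟩
  choose Q hQ1 hQ2 using hQex
  choose dq dr hD1 hD2 hD3 hD4 using W_division a CP pa hpa hC
  let t : ℕ → W d := fun n => Nat.rec 0 (fun n t => dq (Q n + t)) n
  have ht0 : t 0 = 0 := rfl
  have htS : ∀ n, t (n + 1) = dq (Q n + t n) := fun n => rfl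
  set B := 2 / ‖pa‖ with hB
  have hB0 : 0 < B := by positivity
  set A' := max A (4 * B) with hA'
  have hA'0 : 0 < A' := lt_max_of_lt_left hA
  set Kq := K * (G + 1) with hKq
  have hKq0 : 0 < Kq := by positivity
  have hQn : ∀ n : ℕ, ‖Q n‖ ≤ Kq * A' ^ n * Real.Gamma (s * n + 1) := by
    intro n
    have hg := hγ n
    calc ‖Q n‖ ≤ K * A ^ n * Real.Gamma (s * n + 1) * G := hQ1 n
      _ ≤ K * A' ^ n * Real.Gamma (s * n + 1) * (G + 1) := by
          gcongr
          · exact le_max_left _ _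
          · linarith
      _ = _ := by rw [hKq]; ring
  have htn : ∀ n : ℕ, ‖t n‖ ≤ Kq * A' ^ n * Real.Gamma (s * n + 1) := by
    intro n
    induction n with
    | zero => rw [ht0, norm_zero]; have := hγ 0; positivity
    | succ n ih =>
      have hg := hγ n
      have hm := gam_mono hs n
      have h4B : 4 * B ≤ A' := le_max_right _ _
      have hg1 := hγ (n + 1)
      calc ‖t (n + 1)‖ ≤ B * ‖Q n + t n‖ := by rw [htS]; exact hD3 _
        _ ≤ B * (Kq * A' ^ n * Real.Gamma (s * n + 1) + Kq * A' ^ n * Real.Gamma (s * n + 1)) := by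
            gcongr; exact (norm_add_le _ _).trans (add_le_add (hQn n) ih)
        _ = (2 * B) * (Kq * A' ^ n) * Real.Gamma (s * n + 1) := by ring
        _ ≤ (2 * B) * (Kq * A' ^ n) * (2 * Real.Gamma (s * (n + 1 : ℕ) + 1)) := by gcongr
        _ = (4 * B) * ((Kq * A' ^ n) * Real.Gamma (s * (n + 1 : ℕ) + 1)) := by ring
        _ ≤ A' * ((Kq * A' ^ n) * Real.Gamma (s * (n + 1 : ℕ) + 1)) := by gcongr
        _ = _ := by ring
  have hrn : ∀ n : ℕ, ‖dr (Q n + t n)‖ ≤ 4 * Kq * A' ^ n * Real.Gamma (s * n + 1) := by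
    intro n
    calc _ ≤ 2 * ‖Q n + t n‖ := hD4 _
      _ ≤ 2 * (‖Q n‖ + ‖t n‖) := by gcongr; exact norm_add_le _ _
      _ ≤ _ := by have := hQn n; have := htn n; linarith
  obtain ⟨ρ, hρ, hρw⟩ : ∃ ρ > 0, ∀ j, ρ ≤ w j := by
    haveI : Nonempty (Fin d) := ⟨⟨0, hd⟩⟩
    obtain ⟨j0, hj0⟩ := Finite.exists_min w
    exact ⟨w j0, hw1 j0, hj0⟩
  have hwc : ∀ j, (w j : ℂ) ≠ 0 := fun j => by exact_mod_cast (hw1 j).ne'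
  have hu : ∀ x ∈ polydisk d ρ, ∀ j, ‖(fun j => x j / (w j : ℂ)) j‖ ≤ 1 := by
    intro x hx j
    simp only [norm_div, Complex.norm_real, Real.norm_of_nonneg (hw1 j).le]
    rw [div_le_one (hw1 j)]
    exact (hx j).le.trans (hρw j)
  have hxw : ∀ x : Fin d → ℂ, (fun j => x j / (w j : ℂ) * w j) = x := by
    intro x; ext j; exact div_mul_cancel₀ _ (hwc j)
  have hpp : ∀ α : Fin d → ℕ, 0 < ∏ j, w j ^ α j := fun α => Finset.prod_pos fun j _ => pow_pos (hw1 j) _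
  have hser1 : ∀ C : W d, Summable fun α => ‖C α / ((∏ j, w j ^ α j : ℝ) : ℂ)‖ * ρ ^ (∑ j, α j) := by
    intro C
    refine Summable.of_nonneg_of_le (fun _ => by positivity) (fun α => ?_) (W_summable C)
    rw [norm_div, Complex.norm_real, Real.norm_of_nonneg (hpp α).le, div_mul_eq_mul_div,
      div_le_iff₀ (hpp α), ← Finset.prod_pow_eq_pow_sum]
    gcongr with j
    exact hρw j
  have hser2 : ∀ C : W d, ∀ x ∈ polydisk d ρ,
      HasSum (fun α => C α / ((∏ j, w j ^ α j : ℝ) : ℂ) * mono x α) (ev (fun j => x j / (w j : ℂ)) C) := by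
    intro C x hx
    convert ev_hasSum (hu x hx) C using 2 with α
    simp only [mono, div_pow, Finset.prod_div_distrib]
    push_cast
    ring
  refine ⟨ρ, hρ, ?_, fun n x => ev (fun j => x j / (w j : ℂ)) (dr (Q n + t n)),
    fun n x => ev (fun j => x j / (w j : ℂ)) (t n), 4 * Kq, A', by positivity, hA'0, ?_, ?_, ?_, ?_, ?_, ?_⟩
  · have := hρw ⟨0, hd⟩; have := hw2 ⟨0, hd⟩; linarith
  · intro n
    exact analytic_of_series hρ (hser1 _) (hser2 _)
  · intro n β hβ
    rw [mixedPartial_zero β ⟨ρ, hρ, hser1 (dr (Q n + t n)), hser2 _⟩]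
    rw [hD2 _ β hβ, zero_div]
  · intro n x hx
    exact (ev_norm (hu x hx) _).trans (hrn n)
  · intro n x hx
    refine (ev_norm (hu x hx) _).trans ((htn n).trans ?_)
    have := hγ n
    gcongr
    linarith
  · intro x hx
    simp [ht0, ev]
  · intro n x hx
    have h1 := hD1 (Q n + t n) _ (hu x hx)
    rw [ev_add (hu x hx), hQ2 n _ (hu x hx), hev _ (hu x hx), hxw x, ← htS] at h1
    exact h1

/-- **Standard form of `P`-`s`-Gevrey asymptotic expansions** (Theorem 7.3, part (1)).
If a holomorphic `f` on a `P`-sector admits a `P`-`s`-Gevrey asymptotic expansion in the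
estimate sense, then there are bounded holomorphic coefficients `g_n`, with Taylor
coefficients supported off `a + ℕ^d` and Gevrey bounds `sup|g_n| ≤ K·A^n·Γ(sn+1)`, such
that `|f − Σ_{n<N} g_n·P^n| ≤ K·A^N·Γ(sN+1)·|P|^N` on the sector near `0`. -/
theorem standard_form_of_P_s_Gevrey_asymptotic_expansions
    (d : ℕ) (hd : 1 ≤ d) (s : ℝ) (hs : 0 < s)
    (ℓ : Fin d → ℝ) (hℓpos : ∀ j, 0 < ℓ j)
    (hℓinj : Function.Injective fun β : Fin d → ℕ => ∑ j, ℓ j * (β j : ℝ))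
    (R : ℝ) (hR : 0 < R)
    (P : (Fin d → ℂ) → ℂ) (hP : AnalyticOnNhd ℂ P (polydisk d R))
    (hP0 : P 0 = 0) (hPne : ∃ x ∈ polydisk d R, P x ≠ 0)
    (a : Fin d → ℕ)
    (ha : mixedPartial a P 0 ≠ 0)
    (hamin : ∀ β : Fin d → ℕ, mixedPartial β P 0 ≠ 0 → β ≠ a →
      ∑ j, ℓ j * (a j : ℝ) < ∑ j, ℓ j * (β j : ℝ))
    (θ₁ θ₂ : ℝ) (hθ : θ₁ < θ₂) (hθ2 : θ₂ ≤ θ₁ + 2 * Real.pi)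
    (f : (Fin d → ℂ) → ℂ) (hf : AnalyticOnNhd ℂ f (PSector d P θ₁ θ₂ R))
    (ρ₁ : ℝ) (hρ₁ : 0 < ρ₁)
    (fseq : ℕ → (Fin d → ℂ) → ℂ) (K₀ A₀ : ℝ) (hK₀ : 0 < K₀) (hA₀ : 0 < A₀)
    (hfseqA : ∀ n, AnalyticOnNhd ℂ (fseq n) (polydisk d ρ₁))
    (hfseqB : ∀ n : ℕ, ∀ x ∈ polydisk d ρ₁,
      ‖fseq n x‖ ≤ K₀ * A₀ ^ n * Real.Gamma (s * n + 1))
    (hest : ∀ n : ℕ, ∀ x ∈ PSector d P θ₁ θ₂ R ∩ polydisk d ρ₁,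
      ‖f x - fseq n x‖ ≤
        K₀ * A₀ ^ n * Real.Gamma (s * n + 1) * ‖P x‖ ^ n) :
    ∃ ρ > 0, ∃ g : ℕ → (Fin d → ℂ) → ℂ, ∃ K A : ℝ, 0 < K ∧ 0 < A ∧
      (∀ n, AnalyticOnNhd ℂ (g n) (polydisk d ρ)) ∧
      (∀ n, ∀ β : Fin d → ℕ, (∀ j, a j ≤ β j) → mixedPartial β (g n) 0 = 0) ∧
      (∀ n : ℕ, ∀ x ∈ polydisk d ρ,
        ‖g n x‖ ≤ K * A ^ n * Real.Gamma (s * n + 1)) ∧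
      (∀ N : ℕ, ∀ x ∈ PSector d P θ₁ θ₂ R ∩ polydisk d ρ,
        ‖f x - ∑ n ∈ Finset.range N, g n x * P x ^ n‖ ≤
          K * A ^ N * Real.Gamma (s * N + 1) * ‖P x‖ ^ N) := by
  obtain ⟨ρP, hρP, hρPR, hPb, hPw⟩ := P_weights hℓpos hR hP hP0 ha hamin
  have hγ : ∀ n : ℕ, 0 < Real.Gamma (s * n + 1) := fun n => Real.Gamma_pos_of_pos (by positivity)
  let F : ℕ → (Fin d → ℂ) → ℂ := fun n => if n = 0 then fun _ => 0 else fseq n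
  have hF0 : F 0 = fun _ => 0 := rfl
  have hFn : ∀ n, n ≠ 0 → F n = fseq n := fun n hn => if_neg hn
  have hFA : ∀ n, AnalyticOnNhd ℂ (F n) (polydisk d ρ₁) := by
    intro n
    by_cases hn : n = 0
    · subst hn; rw [hF0]; exact fun x _ => analyticAt_const
    · rw [hFn n hn]; exact hfseqA n
  have hFB : ∀ n : ℕ, ∀ x ∈ polydisk d ρ₁, ‖F n x‖ ≤ 2 * K₀ * A₀ ^ n * Real.Gamma (s * n + 1) := by
    intro n x hx
    have hg := hγ n
    by_cases hn : n = 0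
    · subst hn; rw [hF0, norm_zero]; positivity
    · rw [hFn n hn]
      refine (hfseqB n x hx).trans ?_
      gcongr
      linarith
  have hFE : ∀ n : ℕ, ∀ x ∈ PSector d P θ₁ θ₂ R ∩ polydisk d ρ₁,
      ‖f x - F n x‖ ≤ 2 * K₀ * A₀ ^ n * Real.Gamma (s * n + 1) * ‖P x‖ ^ n := by
    intro n x hx
    have hg := hγ n
    by_cases hn : n = 0
    · subst hn
      have h1 := hest 0 x hx
      have h2 := hfseqB 0 x hx.2
      rw [hF0, sub_zero]
      calc ‖f x‖ = ‖(f x - fseq 0 x) + fseq 0 x‖ := by rw [sub_add_cancel]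
        _ ≤ ‖f x - fseq 0 x‖ + ‖fseq 0 x‖ := norm_add_le _ _
        _ ≤ _ := by rw [pow_zero, mul_one] at *; linarith
    · rw [hFn n hn]
      refine (hest n x hx).trans ?_
      gcongr
      linarith
  obtain ⟨ρ', K, A, hρ', hρ'ρ, hK, hA, q, hq1, hq2, hq3⟩ :=
    stage1 hs hP hρP hρPR hPb hPw hθ hρ₁ (by positivity : 0 < 2 * K₀) hA₀ hFA hFB hFE
  obtain ⟨ρ, hρ, hρρ', g, t, K', A', hK', hA', hg1, hg2, hg3, ht1, ht0, hrec⟩ :=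
    stage2 hd hs hPw hρ' hK hA hq1 hq2
  have hsum : ∀ N : ℕ, ∀ x ∈ polydisk d ρ,
      ∑ n ∈ Finset.range N, g n x * P x ^ n = F N x - t N x * P x ^ N := by
    intro N x hx
    induction N with
    | zero => simp [hF0, ht0 x hx]
    | succ N ih =>
      rw [Finset.sum_range_succ, ih]
      have h1 := hrec N x hx
      have h2 := hq3 N x fun j => (hx j).trans_le hρρ'
      rw [pow_succ]
      linear_combination (-(P x ^ N)) * h1 - h2
  refine ⟨ρ, hρ, g, 2 * K₀ + K', max A₀ A', by positivity, lt_max_of_lt_left hA₀, hg1, hg2, ?_, ?_⟩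
  · intro n x hx
    refine (hg3 n x hx).trans ?_
    have := hγ n
    gcongr
    · linarith
    · exact le_max_right _ _
  · intro N x hx
    have hg := hγ N
    have h1 := hFE N x ⟨hx.1, fun j => (hx.2 j).trans_le (hρρ'.trans hρ'ρ)⟩
    have h2 := ht1 N x hx.2
    rw [hsum N x hx.2]
    calc ‖f x - (F N x - t N x * P x ^ N)‖ = ‖(f x - F N x) + t N x * P x ^ N‖ := by
          congr 1; ring
      _ ≤ ‖f x - F N x‖ + ‖t N x‖ * ‖P x‖ ^ N := by
          refine (norm_add_le _ _).trans ?_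
          rw [norm_mul, norm_pow]
      _ ≤ 2 * K₀ * A₀ ^ N * Real.Gamma (s * N + 1) * ‖P x‖ ^ N
          + K' * A' ^ N * Real.Gamma (s * N + 1) * ‖P x‖ ^ N := by gcongr
      _ ≤ 2 * K₀ * (max A₀ A') ^ N * Real.Gamma (s * N + 1) * ‖P x‖ ^ N
          + K' * (max A₀ A') ^ N * Real.Gamma (s * N + 1) * ‖P x‖ ^ N := by
          gcongr
          · exact le_max_left _ _
          · exact le_max_right _ _
      _ = _ := by ring
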